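/- arXiv:math-ph/9905008 — 3 statements merged into one kernel-verified Lean document; each statement's English description precedes it below -/
import Mathlib

section
/- Let λ ∈ ℝ \ {0}, let α ∈ (0,1) be irrational, and let E belong to the spectrum of H_{λ,α,θ'} for some θ' ∈ [0,1). Then lim_{n→∞} (1/|s_n|)·ln‖M(λ,E,s_n)‖ = 0. -/
open scoped Classical

noncomputable section

/-- The Sturmian potential `v_{α,θ}(n) = χ_{[1-α,1)}(nα + θ mod 1)`. -/
def sturmian (α θ : ℝ) (n : ℤ) : ℝ :=
  if Int.fract (n * α + θ) ∈ Set.Ico (1 - α) 1 then 1 else 0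

/-- Iterates of the Gauss map, starting at `α`. -/
def cfGauss (α : ℝ) : ℕ → ℝ
  | 0 => α
  | n + 1 => Int.fract (cfGauss α n)⁻¹

/-- The continued fraction coefficients `a_n` of `α = [a_1, a_2, …]` (for `n ≥ 1`):
`a_1 = ⌊1/α⌋`, `a_2 = ⌊1/fract(1/α)⌋`, … . -/
def cfCoeff (α : ℝ) (n : ℕ) : ℕ := ⌊(cfGauss α (n - 1))⁻¹⌋₊

/-- The standard words, with an index shift: `sWord a n` is `s_{n-1}`.  Thus
`sWord a 0 = s_{-1} = 1`, `sWord a 1 = s_0 = 0`, `sWord a 2 = s_1 = 0^{a_1 - 1} 1`, and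
`sWord a (n+1) = s_n = s_{n-1}^{a_n} s_{n-2}` for `n ≥ 2`. -/
def sWord (a : ℕ → ℕ) : ℕ → List ℝ
  | 0 => [1]
  | 1 => [0]
  | 2 => List.replicate (a 1 - 1) (0 : ℝ) ++ [1]
  | n + 3 => (List.replicate (a (n + 2)) (sWord a (n + 2))).flatten ++ sWord a (n + 1)

/-- The `n`-th letter (for `n ≥ 1`) of the one-sided infinite word `c_α = lim s_n`:
since `|s_n| ≥ n`, it is the `n`-th letter of `s_n`. -/
def cword (α : ℝ) (n : ℕ) : ℝ := (sWord (cfCoeff α) (n + 1)).getD (n - 1) 0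

/-- `w` is a (finite) prefix of the one-sided infinite word `c_α`. -/
def IsPrefC (α : ℝ) (w : List ℝ) : Prop :=
  w = (List.range w.length).map fun i => cword α (i + 1)

/-- The one-step transfer matrix `T(λ,E,a) = [[E - λa, -1], [1, 0]]`. -/
def transferT (lam : ℝ) (E : ℂ) (a : ℝ) : Matrix (Fin 2) (Fin 2) ℂ :=
  !![E - lam * a, -1; 1, 0]

/-- The transfer matrix over a word `w = w_1 … w_n`:
`M(λ,E,w) = T(λ,E,w_n) ⋯ T(λ,E,w_1)`. -/
def transferM (lam : ℝ) (E : ℂ) : List ℝ → Matrix (Fin 2) (Fin 2) ℂ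
  | [] => 1
  | a :: w => transferM lam E w * transferT lam E a

/-- The operator norm on `ℂ²` (with the euclidean norm) of a `2 × 2` complex matrix. -/
def opNorm (A : Matrix (Fin 2) (Fin 2) ℂ) : ℝ :=
  ‖Matrix.toEuclideanCLM (𝕜 := ℂ) A‖

/-- The word `v_{α,θ}^n = v_{α,θ}(1) … v_{α,θ}(n)`. -/
def sturmianWord (α θ : ℝ) (n : ℕ) : List ℝ :=
  (List.range n).map fun k => sturmian α θ (k + 1)

/-- The set of finite nonempty subwords of a two-sided sequence `v : ℤ → ℝ`. -/
def SubZ (v : ℤ → ℝ) : Set (List ℝ) :=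
  {w | w ≠ [] ∧ ∃ k : ℤ, w = (List.range w.length).map fun i => v (k + i)}

/-- The set of finite nonempty subwords of the one-sided word `c_α` (indexed from `1`). -/
def SubC (α : ℝ) : Set (List ℝ) :=
  {w | w ≠ [] ∧ ∃ k : ℕ, 1 ≤ k ∧ w = (List.range w.length).map fun i => cword α (k + i)}

/-- `W_α`, the set of all finite nonempty subwords of the sequences `v_{α,θ}`, `θ ∈ [0,1)`. -/
def Walpha (α : ℝ) : Set (List ℝ) :=
  {w | ∃ θ ∈ Set.Ico (0 : ℝ) 1, w ∈ SubZ (sturmian α θ)}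

/-- `α` is a bounded density number: `limsup_{n→∞} (1/n) ∑_{j=1}^n a_j < ∞` for the
continued fraction coefficients `a_j` of `α`. -/
def BoundedDensity (α : ℝ) : Prop :=
  Filter.IsBoundedUnder (· ≤ ·) Filter.atTop
    (fun n : ℕ => (1 / n : ℝ) * ∑ j ∈ Finset.Icc 1 n, (cfCoeff α j : ℝ))

end

/-!
The matrices over the standard words satisfy `M(s_n) = M(s_{n-2}) M(s_{n-1})^{a_n}`, so their traces
follow a map preserving the Fricke–Vogt polynomial. If consecutive traces leave a suitable bounded
region they are trapped outside it and the trace over every later `s_n` has modulus greater than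
`2`; escaping in this sense is an open condition on the energy. A finitely supported approximate
eigenvector at a point `E` of the spectrum lives on a window of `v_{α,θ'}`, which recurs in
`v_{α,0}`, whose prefixes are the `s_n`. Closing up `s_n` periodically turns it into an
energy near `E` at which the trace over `s_n` equals `2`. Hence no escape occurs at `E`, and all the
traces are bounded.

With bounded traces, the Cayley–Hamilton theorem bounds `‖M(s_{n+3})‖` by
`‖M(s_{n+1})‖ ‖M(s_n)‖` up to a factor that is subexponential in `|s_{n+3}|`. The logarithms of the
norms then grow like a sequence with `d (n + 3) ≤ d (n + 1) + d n`, at a smaller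
exponential rate than the lengths, which satisfy `q (n + 2) ≥ q (n + 1) + q n`.
-/

namespace Sturmian

section TraceMap

variable {R : Type*} [CommRing R]

theorem adjugate_eq_trace_smul_one_sub (A : Matrix (Fin 2) (Fin 2) R) :
    A.adjugate = A.trace • (1 : Matrix (Fin 2) (Fin 2) R) - A := by
  ext i j
  fin_cases i <;> fin_cases j <;> simp [Matrix.adjugate_fin_two, Matrix.trace_fin_two]

theorem mul_self_eq_trace_smul_sub_one {A : Matrix (Fin 2) (Fin 2) R} (hA : A.det = 1) :
    A * A = A.trace • A - 1 := by
  have h := A.mul_adjugate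
  rw [adjugate_eq_trace_smul_one_sub, mul_sub, mul_smul_comm, mul_one, hA, one_smul] at h
  rw [← h, sub_sub_cancel]

/-- A sequence of unimodular matrices obeying the recursion of the transfer matrices over the
standard words. The exponent `a n` plays the role of the coefficient usually indexed by `n + 2`. -/
structure IsStandardProduct (M : ℕ → Matrix (Fin 2) (Fin 2) R) (a : ℕ → ℕ) : Prop where
  det_eq_one : ∀ n, (M n).det = 1
  add_two : ∀ n, M (n + 2) = M n * M (n + 1) ^ a n

/-- The trace of `M n * M (n + 1) ^ p`; as `p` runs from `0` to `a n` it interpolates between the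
traces of `M n` and `M (n + 2)` in a standard product. -/
def mixedTrace (M : ℕ → Matrix (Fin 2) (Fin 2) R) (n p : ℕ) : R :=
  (M n * M (n + 1) ^ p).trace

/-- The Fricke–Vogt polynomial, which the trace map preserves. -/
def fricke (x y z : R) : R := x ^ 2 + y ^ 2 + z ^ 2 - x * y * z

variable {M : ℕ → Matrix (Fin 2) (Fin 2) R} {a : ℕ → ℕ}

theorem mixedTrace_zero (n : ℕ) : mixedTrace M n 0 = (M n).trace := by
  rw [mixedTrace, pow_zero, mul_one]

namespace IsStandardProduct

theorem mixedTrace_add_two (hM : IsStandardProduct M a) (n p : ℕ) :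
    mixedTrace M n (p + 2) = (M (n + 1)).trace * mixedTrace M n (p + 1) - mixedTrace M n p := by
  have h : M (n + 1) ^ (p + 2) = (M (n + 1)).trace • M (n + 1) ^ (p + 1) - M (n + 1) ^ p := by
    rw [pow_add, sq, mul_self_eq_trace_smul_sub_one (hM.det_eq_one _), mul_sub, mul_smul_comm,
      ← pow_succ, mul_one]
  simp only [mixedTrace, h, mul_sub, mul_smul_comm, Matrix.trace_sub, Matrix.trace_smul,
    smul_eq_mul]

theorem mixedTrace_exponent (hM : IsStandardProduct M a) (n : ℕ) :
    mixedTrace M n (a n) = (M (n + 2)).trace := by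
  rw [mixedTrace, hM.add_two]

theorem mixedTrace_exponent_add_one (hM : IsStandardProduct M a) (n : ℕ) :
    mixedTrace M n (a n + 1) = mixedTrace M (n + 1) 1 := by
  rw [mixedTrace, mixedTrace, pow_succ, ← mul_assoc, ← hM.add_two, Matrix.trace_mul_comm, pow_one]

theorem fricke_mixedTrace (hM : IsStandardProduct M a) (n p : ℕ) :
    fricke (M (n + 1)).trace (mixedTrace M n p) (mixedTrace M n (p + 1)) =
      fricke (M (n + 1)).trace (M n).trace (mixedTrace M n 1) := by
  induction p with
  | zero => rw [mixedTrace_zero]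
  | succ p ih =>
    rw [← ih, hM.mixedTrace_add_two, fricke, fricke]
    ring

theorem fricke_trace (hM : IsStandardProduct M a) (n : ℕ) :
    fricke (M (n + 1)).trace (M n).trace (mixedTrace M n 1) =
      fricke (M 1).trace (M 0).trace (mixedTrace M 0 1) := by
  induction n with
  | zero => rfl
  | succ n ih =>
    rw [← ih, ← hM.fricke_mixedTrace n (a n), hM.mixedTrace_exponent,
      hM.mixedTrace_exponent_add_one, fricke, fricke]
    ring

end IsStandardProduct

end TraceMap

section Escape

variable {𝕜 : Type*} [NormedField 𝕜]

/-- The traces have entered the region from which the trace map drives them to infinity. -/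
def Escapes (M : ℕ → Matrix (Fin 2) (Fin 2) 𝕜) (n p : ℕ) : Prop :=
  2 < ‖(M (n + 1)).trace‖ ∧ 2 < ‖mixedTrace M n (p + 1)‖ ∧
    ‖mixedTrace M n p‖ < ‖mixedTrace M n (p + 1)‖

variable {M : ℕ → Matrix (Fin 2) (Fin 2) 𝕜} {a : ℕ → ℕ} {n p : ℕ}

namespace Escapes

theorem norm_mixedTrace_add_two (h : Escapes M n p) (hM : IsStandardProduct M a) :
    ‖mixedTrace M n (p + 1)‖ < ‖mixedTrace M n (p + 2)‖ ∧
      ‖(M (n + 1)).trace‖ < ‖mixedTrace M n (p + 2)‖ := by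
  obtain ⟨hx, hy, hlt⟩ := h
  have hnorm := norm_sub_norm_le ((M (n + 1)).trace * mixedTrace M n (p + 1)) (mixedTrace M n p)
  rw [norm_mul, ← hM.mixedTrace_add_two] at hnorm
  constructor <;> nlinarith

theorem succ (h : Escapes M n p) (hM : IsStandardProduct M a) : Escapes M n (p + 1) :=
  have hlt := (h.norm_mixedTrace_add_two hM).1
  ⟨h.1, h.2.1.trans hlt, hlt⟩

theorem mono {r : ℕ} (h : Escapes M n p) (hM : IsStandardProduct M a) (hpr : p ≤ r) :
    Escapes M n r :=
  Nat.le_induction h (fun _ _ ih => ih.succ hM) r hpr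

theorem next_level (h : Escapes M n p) (hM : IsStandardProduct M a) (hp : p < a n) :
    Escapes M (n + 1) 0 := by
  obtain ⟨r, hr⟩ : ∃ r, a n = r + 1 := Nat.exists_eq_add_one.mpr (Nat.zero_lt_of_lt hp)
  have hesc : Escapes M n r := h.mono hM (by omega)
  have hx := hesc.2.1
  have hy := (hesc.norm_mixedTrace_add_two hM).2
  rw [← hr, hM.mixedTrace_exponent] at hx
  rw [show r + 2 = a n + 1 by omega, hM.mixedTrace_exponent_add_one] at hy
  exact ⟨hx, h.1.trans hy, by rwa [mixedTrace_zero]⟩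

theorem two_lt_norm_trace (h : Escapes M n p) (hM : IsStandardProduct M a) (ha : ∀ n, 0 < a n)
    (hp : p < a n) (k : ℕ) : 2 < ‖(M (n + 1 + k)).trace‖ := by
  cases k with
  | zero => exact h.1
  | succ k =>
    have hesc : Escapes M (n + 1 + k) 0 := by
      induction k with
      | zero => exact h.next_level hM hp
      | succ k ih => exact ih.next_level hM (ha _)
    exact hesc.1

end Escapes

theorem isOpen_setOf_escapes {X : Type*} [TopologicalSpace X]
    {M : X → ℕ → Matrix (Fin 2) (Fin 2) 𝕜} (hM : ∀ k, Continuous fun x => M x k) (n p : ℕ) :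
    IsOpen {x | Escapes (M x) n p} := by
  have hmixed (r : ℕ) : Continuous fun x => mixedTrace (M x) n r :=
    ((hM n).matrix_mul ((hM (n + 1)).pow r)).matrix_trace
  exact (isOpen_lt continuous_const (hM (n + 1)).matrix_trace.norm).inter
    ((isOpen_lt continuous_const (hmixed _).norm).inter (isOpen_lt (hmixed p).norm (hmixed _).norm))

theorem norm_le_of_fricke_eq {x y z c : 𝕜} (h : fricke x y z = c) (hy : ‖y‖ ≤ 2) (hz : ‖z‖ ≤ 2) :
    ‖x‖ ≤ ‖c‖ + 6 := by
  have hx : x ^ 2 = c - y ^ 2 - z ^ 2 + x * y * z := by rw [← h, fricke]; ring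
  have hnorm : ‖x‖ ^ 2 ≤ ‖c‖ + ‖y‖ ^ 2 + ‖z‖ ^ 2 + ‖x‖ * ‖y‖ * ‖z‖ := by
    simp only [← norm_pow, ← norm_mul, hx]
    exact norm_add_le_of_le (norm_sub_le_of_le (norm_sub_le _ _) le_rfl) le_rfl
  have hyz : ‖y‖ * ‖z‖ ≤ 2 * 2 := mul_le_mul hy hz (norm_nonneg _) zero_le_two
  nlinarith [mul_le_mul_of_nonneg_left hyz (norm_nonneg x), norm_nonneg c, norm_nonneg x,
    norm_nonneg y, norm_nonneg z]

namespace IsStandardProduct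

theorem norm_trace_add_two_le (hM : IsStandardProduct M a) (ha : ∀ n, 0 < a n)
    (hesc : ∀ n p, p < a n → ¬ Escapes M n p) (n : ℕ) :
    ‖(M (n + 2)).trace‖ ≤
      max ‖(M n).trace‖ (‖fricke (M 1).trace (M 0).trace (mixedTrace M 0 1)‖ + 6) := by
  have hstep (n p : ℕ) (hp : p < a n) (hx : 2 < ‖(M (n + 1)).trace‖) :
      ‖mixedTrace M n (p + 1)‖ ≤ max ‖mixedTrace M n p‖ 2 := by
    by_contra! h
    exact hesc n p hp ⟨hx, (max_lt_iff.mp h).2, (max_lt_iff.mp h).1⟩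
  have h2 : 2 ≤ ‖fricke (M 1).trace (M 0).trace (mixedTrace M 0 1)‖ + 6 :=
    le_add_of_nonneg_of_le (norm_nonneg _) (by norm_num)
  rcases lt_or_ge 2 ‖(M (n + 1)).trace‖ with hx | hx
  · have hmixed : ∀ p ≤ a n, ‖mixedTrace M n p‖ ≤ max ‖(M n).trace‖ 2 := by
      intro p
      induction p with
      | zero =>
        intro _
        rw [mixedTrace_zero]
        exact le_max_left _ _
      | succ p ih =>
        intro hp
        exact (hstep n p hp hx).trans (max_le (ih (Nat.le_of_succ_le hp)) (le_max_right _ _))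
    rw [← hM.mixedTrace_exponent]
    exact (hmixed _ le_rfl).trans (max_le_max_left _ h2)
  · refine le_max_of_le_right ?_
    rcases lt_or_ge 2 ‖(M (n + 2)).trace‖ with hx' | hx'
    · have hy := hstep (n + 1) 0 (ha _) hx'
      rw [mixedTrace_zero, max_eq_right hx] at hy
      exact norm_le_of_fricke_eq (hM.fricke_trace (n + 1)) hx hy
    · exact hx'.trans h2

theorem exists_norm_trace_le (hM : IsStandardProduct M a) (ha : ∀ n, 0 < a n)
    (hesc : ∀ n p, p < a n → ¬ Escapes M n p) : ∃ B, ∀ n, ‖(M n).trace‖ ≤ B := by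
  set c := ‖fricke (M 1).trace (M 0).trace (mixedTrace M 0 1)‖ + 6
  refine ⟨max (max ‖(M 0).trace‖ ‖(M 1).trace‖) c, fun n => ?_⟩
  induction n using Nat.twoStepInduction with
  | zero => exact le_max_of_le_left (le_max_left _ _)
  | one => exact le_max_of_le_left (le_max_right _ _)
  | more n ih _ =>
    exact (hM.norm_trace_add_two_le ha hesc n).trans (max_le ih (le_max_right _ _))

end IsStandardProduct

end Escape

section NormBounds

open scoped Matrix.Norms.L2Operator

variable {𝕜 : Type*} [RCLike 𝕜]

theorem one_le_norm_of_det_eq_one {ι : Type*} [Fintype ι] [DecidableEq ι] [Nonempty ι]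
    {A : Matrix ι ι 𝕜} (hA : A.det = 1) : 1 ≤ ‖A‖ := by
  by_contra! h
  have hpow : Filter.Tendsto (fun k : ℕ => (A ^ k).det) Filter.atTop (nhds 0) := by
    simpa [Function.comp_def] using
      (continuous_id.matrix_det.tendsto (0 : Matrix ι ι 𝕜)).comp
        (tendsto_pow_atTop_nhds_zero_of_norm_lt_one h)
  simp only [Matrix.det_pow, hA, one_pow, tendsto_const_nhds_iff, one_ne_zero] at hpow

variable {A D : Matrix (Fin 2) (Fin 2) 𝕜} {B : ℝ}

theorem exists_pow_eq_smul_sub_smul_one (hA : A.det = 1) (hB : ‖A.trace‖ ≤ B) (k : ℕ) :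
    ∃ u v : 𝕜, A ^ k = u • A - v • (1 : Matrix (Fin 2) (Fin 2) 𝕜) ∧
      ‖u‖ ≤ (B + 1) ^ k ∧ ‖v‖ ≤ (B + 1) ^ k := by
  have hB0 : 0 ≤ B := (norm_nonneg _).trans hB
  induction k with
  | zero => exact ⟨0, -1, by simp, by simp, by simp⟩
  | succ k ih =>
    obtain ⟨u, v, hpow, hu, hv⟩ := ih
    refine ⟨u * A.trace - v, u, ?_, ?_, ?_⟩
    · rw [pow_succ, hpow, sub_mul, smul_mul_assoc, mul_self_eq_trace_smul_sub_one hA,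
        smul_mul_assoc, one_mul]
      module
    · calc ‖u * A.trace - v‖ ≤ ‖u‖ * ‖A.trace‖ + ‖v‖ := by
            simpa only [norm_mul] using norm_sub_le (u * A.trace) v
        _ ≤ (B + 1) ^ k * B + (B + 1) ^ k := by gcongr
        _ = (B + 1) ^ (k + 1) := by ring
    · exact hu.trans (pow_le_pow_right₀ (by linarith) k.le_succ)

theorem norm_pow_le_of_norm_trace_le (hA : A.det = 1) (hB : ‖A.trace‖ ≤ B) (k : ℕ) :
    ‖A ^ k‖ ≤ 2 * (B + 1) ^ k * ‖A‖ := by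
  obtain ⟨u, v, hpow, hu, hv⟩ := exists_pow_eq_smul_sub_smul_one hA hB k
  have hv0 : 0 ≤ (B + 1) ^ k := (norm_nonneg v).trans hv
  calc ‖A ^ k‖ ≤ ‖u‖ * ‖A‖ + ‖v‖ * ‖(1 : Matrix (Fin 2) (Fin 2) 𝕜)‖ := by
        rw [hpow, ← norm_smul, ← norm_smul]
        exact norm_sub_le _ _
    _ ≤ (B + 1) ^ k * ‖A‖ + (B + 1) ^ k * ‖A‖ := by
        rw [CStarRing.norm_one]
        gcongr
        exact one_le_norm_of_det_eq_one hA
    _ = 2 * (B + 1) ^ k * ‖A‖ := by ring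

theorem norm_adjugate_le_of_norm_trace_le (hA : A.det = 1) (hB : ‖A.trace‖ ≤ B) :
    ‖A.adjugate‖ ≤ (B + 1) * ‖A‖ := by
  calc ‖A.adjugate‖ ≤ ‖A.trace‖ * ‖(1 : Matrix (Fin 2) (Fin 2) 𝕜)‖ + ‖A‖ := by
        rw [adjugate_eq_trace_smul_one_sub, ← norm_smul]
        exact norm_sub_le _ _
    _ ≤ B * ‖A‖ + ‖A‖ := by
        rw [CStarRing.norm_one]
        gcongr
        · exact (norm_nonneg _).trans hB
        · exact one_le_norm_of_det_eq_one hA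
    _ = (B + 1) * ‖A‖ := by ring

theorem norm_adjugate_mul_pow_le (hA : A.det = 1) (hD : D.det = 1) (hAB : ‖A.trace‖ ≤ B)
    (hDB : ‖D.trace‖ ≤ B) (k : ℕ) :
    ‖(A * D ^ k).adjugate‖ ≤ 2 * (B + 1) ^ (k + 2) * (‖D‖ * ‖A‖) := by
  have hD' : D.adjugate.det = 1 := by rw [Matrix.det_adjugate, hD, one_pow]
  have hDB' : ‖D.adjugate.trace‖ ≤ B := by
    rwa [Matrix.adjugate_fin_two, Matrix.trace_fin_two_of, add_comm, ← Matrix.trace_fin_two]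
  have hB0 : 0 ≤ B := (norm_nonneg _).trans hAB
  calc ‖(A * D ^ k).adjugate‖ ≤ ‖D.adjugate ^ k‖ * ‖A.adjugate‖ := by
        rw [Matrix.adjugate_mul_distrib, Matrix.adjugate_pow]
        exact norm_mul_le _ _
    _ ≤ 2 * (B + 1) ^ k * ((B + 1) * ‖D‖) * ((B + 1) * ‖A‖) := by
        gcongr
        · exact (norm_pow_le_of_norm_trace_le hD' hDB' k).trans (by
            gcongr
            exact norm_adjugate_le_of_norm_trace_le hD hDB)
        · exact norm_adjugate_le_of_norm_trace_le hA hAB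
    _ = 2 * (B + 1) ^ (k + 2) * (‖D‖ * ‖A‖) := by ring

/- Writing `F = G * D`, one has `D * F ^ c = G⁻¹ * F ^ (c + 1)`, and `F ^ (c + 1)` is a combination
of `F` and `1`; this avoids a second factor `‖D‖`, which would spoil the growth estimate. -/
theorem norm_mul_mul_pow_pow_le (hA : A.det = 1) (hD : D.det = 1) (hAB : ‖A.trace‖ ≤ B)
    (hDB : ‖D.trace‖ ≤ B) (b c : ℕ) (hB : ‖(A * D ^ (b + 1)).trace‖ ≤ B) :
    ‖D * (A * D ^ (b + 1)) ^ c‖ ≤ 3 * (B + 1) ^ (b + c + 3) * (‖D‖ * ‖A‖) := by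
  set G := A * D ^ b
  have hF : A * D ^ (b + 1) = G * D := by rw [pow_succ, mul_assoc]
  have hG : G.adjugate * G = 1 := by
    rw [Matrix.adjugate_mul, Matrix.det_mul, Matrix.det_pow, hA, hD, one_pow, mul_one, one_smul]
  have hFdet : (G * D).det = 1 := by
    rw [← hF, Matrix.det_mul, Matrix.det_pow, hA, hD, one_pow, mul_one]
  rw [hF] at hB ⊢
  obtain ⟨u, v, hpow, hu, hv⟩ := exists_pow_eq_smul_sub_smul_one hFdet hB (c + 1)
  have hcancel : D * (G * D) ^ c = u • D - v • G.adjugate := by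
    calc D * (G * D) ^ c = G.adjugate * (G * D) ^ (c + 1) := by
          rw [pow_succ', ← mul_assoc, ← mul_assoc, hG, one_mul]
      _ = u • D - v • G.adjugate := by
          rw [hpow, mul_sub, mul_smul_comm, mul_smul_comm, ← mul_assoc, hG, one_mul, mul_one]
  have hA1 : 1 ≤ ‖A‖ := one_le_norm_of_det_eq_one hA
  have hB1 : 1 ≤ B + 1 := by linarith [(norm_nonneg _).trans hB]
  calc ‖D * (G * D) ^ c‖ ≤ ‖u‖ * ‖D‖ + ‖v‖ * ‖G.adjugate‖ := by
        rw [hcancel, ← norm_smul, ← norm_smul]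
        exact norm_sub_le _ _
    _ ≤ (B + 1) ^ (c + 1) * ((B + 1) ^ (b + 2) * (‖D‖ * ‖A‖)) +
          (B + 1) ^ (c + 1) * (2 * (B + 1) ^ (b + 2) * (‖D‖ * ‖A‖)) := by
        gcongr
        · exact (le_mul_of_one_le_right (norm_nonneg D) hA1).trans
            (le_mul_of_one_le_left (by positivity) (one_le_pow₀ hB1))
        · exact norm_adjugate_mul_pow_le hA hD hAB hDB b
    _ = 3 * (B + 1) ^ (b + c + 3) * (‖D‖ * ‖A‖) := by ring

theorem IsStandardProduct.log_norm_add_three_le {M : ℕ → Matrix (Fin 2) (Fin 2) 𝕜} {a : ℕ → ℕ}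
    (hM : IsStandardProduct M a) (ha : ∀ n, 0 < a n) (hB : ∀ n, ‖(M n).trace‖ ≤ B) (n : ℕ) :
    Real.log ‖M (n + 3)‖ ≤ Real.log ‖M (n + 1)‖ + Real.log ‖M n‖ +
      (Real.log 3 + (a n + a (n + 1) + 2) * Real.log (B + 1)) := by
  have hpos (k : ℕ) : 0 < ‖M k‖ :=
    zero_lt_one.trans_le (one_le_norm_of_det_eq_one (hM.det_eq_one k))
  have hB0 : 0 < B + 1 := by linarith [(norm_nonneg _).trans (hB 0)]
  obtain ⟨b, hb⟩ : ∃ b, a n = b + 1 := Nat.exists_eq_add_one.mpr (ha n)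
  have htrace : ‖(M n * M (n + 1) ^ (b + 1)).trace‖ ≤ B := by
    rw [← hb, ← hM.add_two]
    exact hB _
  have hnorm := norm_mul_mul_pow_pow_le (hM.det_eq_one n) (hM.det_eq_one (n + 1)) (hB n)
    (hB (n + 1)) b (a (n + 1)) htrace
  rw [← hb, ← hM.add_two, ← hM.add_two] at hnorm
  refine (Real.log_le_log (hpos _) hnorm).trans_eq ?_
  rw [Real.log_mul (by positivity) (mul_pos (hpos _) (hpos _)).ne',
    Real.log_mul (by norm_num) (by positivity), Real.log_mul (hpos _).ne' (hpos _).ne',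
    Real.log_pow, hb]
  push_cast
  ring

end NormBounds

section Growth

open Filter Topology Asymptotics

theorem exists_le_mul_pow_of_le_add {d : ℕ → ℝ} (hd : ∀ n, d (n + 3) ≤ d (n + 1) + d n) :
    ∃ C, ∀ n, d n ≤ C * (4 / 3) ^ n := by
  set C := |d 0| + |d 1| + |d 2|
  have hC : 0 ≤ C := by positivity
  have htriple (n : ℕ) : d n ≤ C * (4 / 3) ^ n ∧ d (n + 1) ≤ C * (4 / 3) ^ (n + 1) ∧
      d (n + 2) ≤ C * (4 / 3) ^ (n + 2) := by
    induction n with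
    | zero =>
      have h0 := le_abs_self (d 0)
      have h1 := le_abs_self (d 1)
      have h2 := le_abs_self (d 2)
      refine ⟨?_, ?_, ?_⟩ <;> norm_num <;> simp only [C] <;>
        linarith [abs_nonneg (d 0), abs_nonneg (d 1), abs_nonneg (d 2)]
    | succ n ih =>
      obtain ⟨h0, h1, h2⟩ := ih
      refine ⟨h1, h2, (hd n).trans ?_⟩
      have : 0 ≤ C * (4 / 3) ^ n := by positivity
      rw [show C * (4 / 3) ^ (n + 1 + 2) = 64 / 27 * (C * (4 / 3) ^ n) by ring]
      rw [show C * (4 / 3) ^ (n + 1) = 4 / 3 * (C * (4 / 3) ^ n) by ring] at h1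
      linarith
  exact ⟨C, fun n => (htriple n).1⟩

variable {m q e : ℕ → ℝ}

theorem isBigO_pow_of_add_le (hq0 : 0 < q 0) (hmono : Monotone q)
    (hq : ∀ n, q n + q (n + 1) ≤ q (n + 2)) : (fun n : ℕ => (3 / 2 : ℝ) ^ n) =O[atTop] q := by
  have hbound (n : ℕ) : 2 / 3 * q 0 * (3 / 2) ^ n ≤ q n := by
    induction n using Nat.twoStepInduction with
    | zero => linarith
    | one => linarith [hmono zero_le_one]
    | more n h0 h1 =>
      rw [pow_succ] at h1 ⊢
      rw [pow_succ]
      have : 0 < q 0 * (3 / 2 : ℝ) ^ n := by positivity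
      linarith [hq n]
  refine IsBigO.of_bound (3 / (2 * q 0)) (Eventually.of_forall fun n => ?_)
  rw [Real.norm_of_nonneg (by positivity), Real.norm_of_nonneg (hq0.le.trans (hmono n.zero_le)),
    div_mul_eq_mul_div, le_div_iff₀ (by positivity)]
  linarith [hbound n]

theorem eventually_le_mul_of_le_add {d : ℕ → ℝ} (hd : ∀ᶠ n in atTop, d (n + 3) ≤ d (n + 1) + d n)
    (hq0 : 0 < q 0) (hmono : Monotone q) (hq : ∀ n, q n + q (n + 1) ≤ q (n + 2)) {ε : ℝ}
    (hε : 0 < ε) : ∀ᶠ n in atTop, d n ≤ ε * q n := by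
  obtain ⟨N, hN⟩ := eventually_atTop.mp hd
  obtain ⟨C, hC⟩ := exists_le_mul_pow_of_le_add (d := fun n => d (n + N)) fun n => by
    simpa only [add_right_comm] using hN (n + N) (Nat.le_add_left _ _)
  have hpow : (fun n : ℕ => C * (4 / 3 : ℝ) ^ n) =o[atTop] q :=
    ((isLittleO_pow_pow_of_lt_left (by norm_num) (by norm_num)).trans_isBigO
      (isBigO_pow_of_add_le hq0 hmono hq)).const_mul_left C
  rw [← map_add_atTop_eq_nat N, eventually_map]
  filter_upwards [hpow.bound hε] with n hn
  rw [Real.norm_of_nonneg (hq0.le.trans (hmono n.zero_le))] at hn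
  calc d (n + N) ≤ C * (4 / 3) ^ n := hC n
    _ ≤ ε * q n := (le_abs_self _).trans hn
    _ ≤ ε * q (n + N) := by gcongr; exact hmono (Nat.le_add_right _ _)

theorem tendsto_div_zero_of_le_add_add (hm : ∀ n, 0 ≤ m n)
    (hrec : ∀ n, m (n + 3) ≤ m (n + 1) + m n + e n) (hq0 : 0 < q 0) (hmono : Monotone q)
    (hq : ∀ n, q n + q (n + 1) ≤ q (n + 2))
    (he : Tendsto (fun n => e n / q (n + 3)) atTop (𝓝 0)) :
    Tendsto (fun n => m n / q n) atTop (𝓝 0) := by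
  have hqpos (n : ℕ) : 0 < q n := hq0.trans_le (hmono n.zero_le)
  refine tendsto_order.mpr ⟨fun r hr => Eventually.of_forall fun n =>
    hr.trans_le (div_nonneg (hm n) (hqpos n).le), fun r hr => ?_⟩
  have hε : 0 < r / 5 := by linarith
  have hd : ∀ᶠ n in atTop, m (n + 3) - 3 * (r / 5) * q (n + 3) ≤
      m (n + 1) - 3 * (r / 5) * q (n + 1) + (m n - 3 * (r / 5) * q n) := by
    filter_upwards [he.eventually_le_const hε] with n hn
    rw [div_le_iff₀ (hqpos _)] at hn
    have hgap : 3 * (q (n + 1) + q n) ≤ 2 * q (n + 3) := by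
      linarith [hq n, hq (n + 1), hmono n.le_succ]
    nlinarith [hrec n]
  filter_upwards [eventually_le_mul_of_le_add (d := fun n => m n - 3 * (r / 5) * q n) hd hq0
    hmono hq hε] with n hn
  rw [div_lt_iff₀ (hqpos n)]
  nlinarith [hqpos n]

/-- A sequence of lengths obeying the recursion of the denominators of the convergents of a
continued fraction, with the same index shift as in `IsStandardProduct`. -/
structure IsContinuant (Q a : ℕ → ℕ) : Prop where
  coeff_pos : ∀ n, 0 < a n
  zero_pos : 0 < Q 0
  zero_le_one : Q 0 ≤ Q 1
  add_two : ∀ n, Q (n + 2) = a n * Q (n + 1) + Q n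

namespace IsContinuant

variable {a Q : ℕ → ℕ}

theorem add_le (hQ : IsContinuant Q a) (n : ℕ) : Q n + Q (n + 1) ≤ Q (n + 2) := by
  rw [hQ.add_two, add_comm]
  gcongr
  exact Nat.le_mul_of_pos_left _ (hQ.coeff_pos n)

theorem monotone (hQ : IsContinuant Q a) : Monotone Q := by
  refine monotone_nat_of_le_succ fun n => ?_
  cases n with
  | zero => exact hQ.zero_le_one
  | succ n => exact (Nat.le_add_left _ _).trans (hQ.add_le n)

theorem pos (hQ : IsContinuant Q a) (n : ℕ) : 0 < Q n :=
  hQ.zero_pos.trans_le (hQ.monotone n.zero_le)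

theorem tendsto_atTop (hQ : IsContinuant Q a) : Tendsto Q atTop atTop := by
  have hstrict : StrictMono fun n => Q (n + 1) :=
    strictMono_nat_of_lt_succ fun n => (Nat.lt_add_of_pos_left (hQ.pos n)).trans_le (hQ.add_le n)
  exact (tendsto_add_atTop_iff_nat 1).mp hstrict.tendsto_atTop

theorem tendsto_const_div (hQ : IsContinuant Q a) (c : ℝ) :
    Tendsto (fun n => c / (Q n : ℝ)) atTop (𝓝 0) :=
  (tendsto_natCast_atTop_atTop.comp hQ.tendsto_atTop).const_div_atTop c

theorem tendsto_coeff_div (hQ : IsContinuant Q a) :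
    Tendsto (fun n => (a n : ℝ) / Q (n + 2)) atTop (𝓝 0) := by
  refine squeeze_zero (fun n => by positivity) (fun n => ?_)
    ((tendsto_add_atTop_iff_nat 1).mpr (hQ.tendsto_const_div 1))
  have hpos (k : ℕ) : (0 : ℝ) < Q k := Nat.cast_pos.mpr (hQ.pos k)
  rw [div_le_div_iff₀ (hpos _) (hpos _), one_mul, hQ.add_two]
  push_cast
  linarith [hpos n]

end IsContinuant

open scoped Matrix.Norms.L2Operator in
theorem IsStandardProduct.tendsto_log_norm_div {𝕜 : Type*} [RCLike 𝕜]
    {M : ℕ → Matrix (Fin 2) (Fin 2) 𝕜} {a Q : ℕ → ℕ} (hM : IsStandardProduct M a)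
    (hQ : IsContinuant Q a) {B : ℝ} (hB : ∀ n, ‖(M n).trace‖ ≤ B) :
    Tendsto (fun n => Real.log ‖M n‖ / Q n) atTop (𝓝 0) := by
  refine tendsto_div_zero_of_le_add_add
    (fun n => Real.log_nonneg (one_le_norm_of_det_eq_one (hM.det_eq_one n)))
    (hM.log_norm_add_three_le hQ.coeff_pos hB) (Nat.cast_pos.mpr hQ.zero_pos)
    (fun _ _ hkl => Nat.cast_le.mpr (hQ.monotone hkl)) (fun n => mod_cast hQ.add_le n) ?_
  have hfirst : Tendsto (fun n => (a n : ℝ) / Q (n + 3)) atTop (𝓝 0) :=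
    squeeze_zero (fun n => by positivity)
      (fun n => div_le_div_of_nonneg_left (Nat.cast_nonneg _) (Nat.cast_pos.mpr (hQ.pos _))
        (Nat.cast_le.mpr (hQ.monotone (Nat.le_succ _)))) hQ.tendsto_coeff_div
  have hsecond : Tendsto (fun n => (a (n + 1) : ℝ) / Q (n + 3)) atTop (𝓝 0) :=
    (tendsto_add_atTop_iff_nat 1).mpr hQ.tendsto_coeff_div
  have hconst : Tendsto (fun n => (Real.log 3 + 2 * Real.log (B + 1)) / Q (n + 3)) atTop (𝓝 0) :=
    (tendsto_add_atTop_iff_nat 3).mpr (hQ.tendsto_const_div _)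
  convert hconst.add ((hfirst.add hsecond).mul_const (Real.log (B + 1))) using 2
  · ring
  · ring

end Growth

section TransferMatrices

variable (lam : ℝ) (E : ℂ)

theorem transferM_append (v w : List ℝ) :
    transferM lam E (v ++ w) = transferM lam E w * transferM lam E v := by
  induction v with
  | nil => rw [List.nil_append, transferM, mul_one]
  | cons x v ih => rw [List.cons_append, transferM, transferM, ih, mul_assoc]

theorem transferM_flatten_replicate (k : ℕ) (w : List ℝ) :
    transferM lam E (List.replicate k w).flatten = transferM lam E w ^ k := by
  induction k with
  | zero => rfl
  | succ k ih => rw [List.replicate_succ, List.flatten_cons, transferM_append, ih, pow_succ]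

theorem det_transferM (w : List ℝ) : (transferM lam E w).det = 1 := by
  induction w with
  | nil => exact Matrix.det_one
  | cons x w ih => simp [transferM, ih, transferT, Matrix.det_fin_two_of]

theorem continuous_transferM (w : List ℝ) : Continuous fun E : ℂ => transferM lam E w := by
  induction w with
  | nil => exact continuous_const
  | cons x w ih =>
    refine ih.matrix_mul (continuous_matrix fun i j => ?_)
    fin_cases i <;> fin_cases j <;> simp only [transferT] <;> fun_prop

theorem isStandardProduct_transferM (a : ℕ → ℕ) :
    IsStandardProduct (fun n => transferM lam E (sWord a (n + 1))) fun n => a (n + 2) where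
  det_eq_one n := det_transferM lam E _
  add_two n := by simp only [sWord, transferM_append, transferM_flatten_replicate]

end TransferMatrices

section ContinuedFraction

variable {α : ℝ}

theorem irrational_cfGauss (hα : Irrational α) (n : ℕ) : Irrational (cfGauss α n) := by
  induction n with
  | zero => exact hα
  | succ n ih => exact ih.inv.sub_intCast _

theorem cfGauss_succ_mem_Ioo (hα : Irrational α) (n : ℕ) : cfGauss α (n + 1) ∈ Set.Ioo 0 1 :=
  ⟨(Int.fract_nonneg _).lt_of_ne' (irrational_cfGauss hα (n + 1)).ne_zero, Int.fract_lt_one _⟩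

theorem cfCoeff_add_two_pos (hα : Irrational α) (n : ℕ) : 0 < cfCoeff α (n + 2) := by
  have h := cfGauss_succ_mem_Ioo hα n
  exact Nat.floor_pos.mpr ((one_le_inv₀ h.1).mpr h.2.le)

theorem cfGauss_fract_inv (α : ℝ) (n : ℕ) : cfGauss (Int.fract α⁻¹) n = cfGauss α (n + 1) := by
  induction n with
  | zero => rfl
  | succ n ih => rw [cfGauss, ih, ← cfGauss]

theorem isContinuant_length_sWord (hα : Irrational α) :
    IsContinuant (fun n => (sWord (cfCoeff α) (n + 1)).length) fun n => cfCoeff α (n + 2) where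
  coeff_pos := cfCoeff_add_two_pos hα
  zero_pos := Nat.one_pos
  zero_le_one := by simp [sWord]
  add_two n := by simp [sWord]

end ContinuedFraction

section CuttingSequences

/-- The standard words whose recursion is uniform from the start: compared with `sWord`, the first
exponent `d 0` stands for `a_1 - 1`. -/
def standardWord (d : ℕ → ℕ) : ℕ → List ℝ
  | 0 => [1]
  | 1 => [0]
  | n + 2 => (List.replicate (d n) (standardWord d (n + 1))).flatten ++ standardWord d n

/-- The substitution `0 ↦ 0^d 1`, `1 ↦ 0`, whose iterates generate the standard words. -/
noncomputable def substitution (d : ℕ) (x : ℝ) : List ℝ :=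
  if x = 0 then List.replicate d 0 ++ [1] else [0]

theorem flatMap_flatten_replicate {β γ : Type*} (f : β → List γ) (k : ℕ) (w : List β) :
    (List.replicate k w).flatten.flatMap f = (List.replicate k (w.flatMap f)).flatten := by
  induction k with
  | zero => rfl
  | succ k ih => simp only [List.replicate_succ, List.flatten_cons, List.flatMap_append, ih]

theorem standardWord_succ (d : ℕ → ℕ) (n : ℕ) :
    standardWord d (n + 1) =
      (standardWord (fun k => d (k + 1)) n).flatMap (substitution (d 0)) := by
  induction n using Nat.twoStepInduction with
  | zero => simp [standardWord, substitution]
  | one => simp [standardWord, substitution]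
  | more n ih ih' =>
    conv_rhs => rw [standardWord, List.flatMap_append, flatMap_flatten_replicate, ← ih, ← ih']
    rfl

/-- The word `w` records the steps (`0` to the right, `1` upwards) of the staircase that starts at
the lattice point `(z, o)` and approximates the line of slope `ρ` from below. -/
inductive IsCuttingWord (ρ : ℝ) : ℕ → ℕ → List ℝ → Prop
  | nil (z o : ℕ) : IsCuttingWord ρ z o []
  | one {z o : ℕ} {w : List ℝ} : (o + 1 : ℝ) < ρ * (z + 1) → IsCuttingWord ρ z (o + 1) w →
      IsCuttingWord ρ z o (1 :: w)
  | zero {z o : ℕ} {w : List ℝ} : ρ * (z + 1) < (o + 1 : ℝ) → IsCuttingWord ρ (z + 1) o w →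
      IsCuttingWord ρ z o (0 :: w)

variable {ρ ρ' α : ℝ} {z o d : ℕ} {w : List ℝ}

theorem IsCuttingWord.replicate_zero_append (k : ℕ) (hk : ρ * (z + k) < (o + 1 : ℝ)) (hρ : 0 ≤ ρ)
    (hw : IsCuttingWord ρ (z + k) o w) : IsCuttingWord ρ z o (List.replicate k 0 ++ w) := by
  induction k generalizing z with
  | zero => exact hw
  | succ k ih =>
    push_cast at hk
    refine .zero (lt_of_le_of_lt (by gcongr; simp) hk) (ih ?_ ?_)
    · push_cast
      rwa [add_assoc, add_comm 1]
    · rwa [add_assoc, add_comm 1]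

theorem IsCuttingWord.flatMap_substitution (hρ' : 0 ≤ ρ') (h : ρ * (d + ρ') = 1)
    (hw : IsCuttingWord ρ' z o w) (ho : (o : ℝ) < ρ' * (z + 1)) :
    IsCuttingWord ρ (d * z + o) z (w.flatMap (substitution d)) := by
  have hρ : 0 < ρ := pos_of_mul_pos_left (h ▸ one_pos) (by positivity)
  have hlt {x y : ℝ} (hxy : x < (d + ρ') * y) : ρ * x < y := by
    calc ρ * x < ρ * ((d + ρ') * y) := by gcongr
      _ = y := by rw [← mul_assoc, h, one_mul]
  have hgt {x y : ℝ} (hxy : (d + ρ') * y < x) : y < ρ * x := by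
    calc y = ρ * ((d + ρ') * y) := by rw [← mul_assoc, h, one_mul]
      _ < ρ * x := by gcongr
  induction hw with
  | nil => exact .nil _ _
  | @one z o w hup _ ih =>
    rw [List.flatMap_cons, substitution, if_neg one_ne_zero]
    refine .zero (hlt ?_) (ih (by exact_mod_cast hup))
    push_cast
    nlinarith [(d.cast_nonneg : (0 : ℝ) ≤ d)]
  | @zero z o w hright _ ih =>
    rw [List.flatMap_cons, substitution, if_pos rfl, List.append_assoc]
    refine .replicate_zero_append d (hlt ?_) hρ.le (.one (hgt ?_) ?_)
    · push_cast
      linarith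
    · push_cast
      linarith
    · rw [show d * z + o + d = d * (z + 1) + o by ring]
      refine ih ?_
      push_cast
      linarith

theorem isCuttingWord_standardWord_succ (hirr : Irrational ρ) (hρ : 0 < ρ) {n : ℕ}
    (h : IsCuttingWord (Int.fract ρ⁻¹) 0 0
      (standardWord (fun k => cfCoeff (Int.fract ρ⁻¹) (k + 1)) n)) :
    IsCuttingWord ρ 0 0 (standardWord (fun k => cfCoeff ρ (k + 1)) (n + 1)) := by
  have hcoeff : (fun k => cfCoeff (Int.fract ρ⁻¹) (k + 1)) = fun k => cfCoeff ρ (k + 1 + 1) :=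
    funext fun k => congrArg (fun x : ℝ => ⌊x⁻¹⌋₊) (cfGauss_fract_inv ρ k)
  have hinv : ρ * ((cfCoeff ρ 1 : ℕ) + Int.fract ρ⁻¹) = 1 := by
    rw [show (cfCoeff ρ 1 : ℝ) = ⌊ρ⁻¹⌋ from natCast_floor_eq_intCast_floor (inv_pos.mpr hρ).le,
      Int.floor_add_fract, mul_inv_cancel₀ hρ.ne']
  rw [hcoeff] at h
  rw [standardWord_succ]
  exact h.flatMap_substitution (Int.fract_nonneg _) hinv
    (by simpa [cfGauss] using (cfGauss_succ_mem_Ioo hirr 0).1)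

theorem isCuttingWord_standardWord_of_lt_one (hirr : Irrational ρ) (hρ : ρ ∈ Set.Ioo 0 1) (n : ℕ) :
    IsCuttingWord ρ 0 0 (standardWord (fun k => cfCoeff ρ (k + 1)) (n + 1)) := by
  induction n generalizing ρ with
  | zero => exact .zero (by simpa using hρ.2) (.nil _ _)
  | succ n ih =>
    exact isCuttingWord_standardWord_succ hirr hρ.1
      (ih (irrational_cfGauss hirr 1) (cfGauss_succ_mem_Ioo hirr 0))

theorem isCuttingWord_standardWord (hirr : Irrational ρ) (hρ : 0 < ρ) (n : ℕ) :
    IsCuttingWord ρ 0 0 (standardWord (fun k => cfCoeff ρ (k + 1)) (n + 2)) :=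
  isCuttingWord_standardWord_succ hirr hρ (isCuttingWord_standardWord_of_lt_one
    (irrational_cfGauss hirr 1) (cfGauss_succ_mem_Ioo hirr 0) n)

/- At the lattice point `(z, o)` the sequence `n ↦ ⌊n α⌋` takes the value `o` at `n = z + o + 1`,
because `α` is the density of the letter `1`. -/
theorem sturmian_eq_ite_of_slope (hα : α < 1) (hρ : α = ρ * (1 - α)) (ho : (o : ℝ) ≤ ρ * (z + 1))
    (hz : ρ * z < o + 1) :
    sturmian α 0 (z + o + 1) = if (o + 1 : ℝ) ≤ ρ * (z + 1) then 1 else 0 := by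
  have hsub : 0 < 1 - α := sub_pos.mpr hα
  have hfract : Int.fract (((z + o + 1 : ℤ) : ℝ) * α + 0) = (z + o + 1) * α - o := by
    have hlower := mul_le_mul_of_nonneg_right ho hsub.le
    have hupper := mul_lt_mul_of_pos_right hz hsub
    refine Int.fract_eq_iff.mpr ⟨?_, ?_, o, by push_cast; ring⟩
    · linear_combination hlower - (z + 1) * hρ
    · linear_combination hupper + z * hρ
  have hmem : 1 - α ≤ (z + o + 1) * α - o ↔ (o + 1 : ℝ) ≤ ρ * (z + 1) := by
    rw [← mul_le_mul_iff_left₀ (b := (o + 1 : ℝ)) hsub]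
    constructor <;> intro h
    · linear_combination h + (z + 1) * hρ
    · linear_combination h - (z + 1) * hρ
  simp only [sturmian, Set.mem_Ico, Int.fract_lt_one, and_true]
  rw [hfract]
  simp only [hmem]

theorem IsCuttingWord.eq_map_sturmian (hα : α < 1) (hρα : α = ρ * (1 - α)) (hρ : 0 ≤ ρ)
    (hw : IsCuttingWord ρ z o w) (ho : (o : ℝ) ≤ ρ * (z + 1)) (hz : ρ * z < o + 1) :
    w = (List.range w.length).map fun i : ℕ => sturmian α 0 (z + o + 1 + i) := by
  induction hw with
  | nil => rfl
  | @one z o w hup _ ih =>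
    rw [List.length_cons, List.range_succ_eq_map, List.map_cons, List.map_map]
    congr 1
    · rw [Nat.cast_zero, add_zero, sturmian_eq_ite_of_slope hα hρα ho hz, if_pos hup.le]
    · refine (ih (by exact_mod_cast hup.le) (by push_cast; linarith)).trans
        (List.map_congr_left fun i _ => congrArg (sturmian α 0) ?_)
      push_cast
      ring
  | @zero z o w hright _ ih =>
    rw [List.length_cons, List.range_succ_eq_map, List.map_cons, List.map_map]
    congr 1
    · rw [Nat.cast_zero, add_zero, sturmian_eq_ite_of_slope hα hρα ho hz, if_neg hright.not_ge]
    · refine (ih (by push_cast; linarith) (by exact_mod_cast hright)).trans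
        (List.map_congr_left fun i _ => congrArg (sturmian α 0) ?_)
      push_cast
      ring

theorem sWord_eq_standardWord (α : ℝ) (n : ℕ) :
    sWord (cfCoeff α) n = standardWord (fun k => cfCoeff (α⁻¹ - 1)⁻¹ (k + 1)) n := by
  have hgauss (n : ℕ) : cfGauss (α⁻¹ - 1)⁻¹ (n + 1) = cfGauss α (n + 1) := by
    rw [← cfGauss_fract_inv, ← cfGauss_fract_inv, inv_inv, Int.fract_sub_one]
  have hfirst : cfCoeff (α⁻¹ - 1)⁻¹ 1 = cfCoeff α 1 - 1 := by
    simp only [cfCoeff, Nat.sub_self, cfGauss, inv_inv, Nat.floor_sub_one]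
  have hcoeff (n : ℕ) : cfCoeff (α⁻¹ - 1)⁻¹ (n + 2) = cfCoeff α (n + 2) :=
    congrArg (fun x : ℝ => ⌊x⁻¹⌋₊) (hgauss n)
  induction n using Nat.strong_induction_on with
  | _ n ih =>
    match n with
    | 0 => rfl
    | 1 => rfl
    | 2 => simp [sWord, standardWord, hfirst]
    | n + 3 =>
      rw [sWord, standardWord, hcoeff, ih (n + 2) (by omega), ih (n + 1) (by omega)]

theorem sWord_eq_map_sturmian (hirr : Irrational α) (hα : α ∈ Set.Ioo 0 1) (n : ℕ) :
    sWord (cfCoeff α) (n + 2) =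
      (List.range (sWord (cfCoeff α) (n + 2)).length).map fun k : ℕ => sturmian α 0 (k + 1) := by
  have hsub : 0 < α⁻¹ - 1 := sub_pos.mpr ((one_lt_inv₀ hα.1).mpr hα.2)
  have hirr' : Irrational (α⁻¹ - 1)⁻¹ :=
    (mod_cast hirr.inv.sub_intCast 1 : Irrational (α⁻¹ - 1)).inv
  have hslope : α = (α⁻¹ - 1)⁻¹ * (1 - α) := by
    rw [eq_inv_mul_iff_mul_eq₀ hsub.ne', sub_mul, inv_mul_cancel₀ hα.1.ne', one_mul]
  have hcut := isCuttingWord_standardWord hirr' (inv_pos.mpr hsub) n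
  rw [← sWord_eq_standardWord] at hcut
  have hmap := hcut.eq_map_sturmian hα.2 hslope (inv_pos.mpr hsub).le (by simpa using hsub.le)
    (by simp)
  simpa only [Nat.cast_zero, zero_add, add_comm (1 : ℤ)] using hmap

end CuttingSequences

section Recurrence

open Filter Topology

theorem frequently_natCast_mul_add_intCast_mem {α : ℝ} (hirr : Irrational α) {U : Set ℝ} {x : ℝ}
    (hU : U ∈ 𝓝 x) : ∃ᶠ p : ℕ in atTop, ∃ k : ℤ, p * α + k ∈ U := by
  have : Fact ((0 : ℝ) < 1) := ⟨one_pos⟩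
  have hdense : DenseRange (· • (α : AddCircle (1 : ℝ)) : ℤ → AddCircle (1 : ℝ)) :=
    AddCircle.denseRange_zsmul_coe_iff.mpr (by simpa using hirr)
  have hcluster : MapClusterPt (x : AddCircle (1 : ℝ)) atTop
      (fun p : ℕ => p • (α : AddCircle (1 : ℝ))) :=
    mapClusterPt_atTop_nsmul_iff_mem_topologicalClosure_zmultiples.mpr (hdense x)
  have hnhds : QuotientAddGroup.mk '' U ∈ 𝓝 (x : AddCircle (1 : ℝ)) :=
    QuotientAddGroup.isOpenMap_coe.image_mem_nhds hU
  refine (hcluster.frequently hnhds).mono fun p ⟨y, hy, hyp⟩ => ?_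
  have hzero : ((y - p • α : ℝ) : AddCircle (1 : ℝ)) = 0 := by
    rw [AddCircle.coe_sub, AddCircle.coe_nsmul]
    exact sub_eq_zero.mpr hyp
  obtain ⟨k, hk⟩ := (AddCircle.coe_eq_zero_iff 1).mp hzero
  refine ⟨k, ?_⟩
  rw [zsmul_one, nsmul_eq_mul] at hk
  rwa [hk, add_sub_cancel]

variable {α : ℝ}

theorem sturmian_add_natCast (α θ : ℝ) (n : ℤ) (p : ℕ) :
    sturmian α θ (n + p) = sturmian α (θ + p * α) n := by
  simp only [sturmian]
  congr 3
  push_cast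
  ring

theorem sturmian_add_intCast (α θ : ℝ) (k n : ℤ) : sturmian α (θ + k) n = sturmian α θ n := by
  simp only [sturmian, ← add_assoc, Int.fract_add_intCast]

theorem eventually_sturmian_eq (α θ : ℝ) (n : ℤ) :
    ∀ᶠ t in 𝓝[≥] θ, sturmian α t n = sturmian α θ n := by
  have hadd : Tendsto (fun t => n * α + t) (𝓝[≥] θ) (𝓝[≥] (n * α + θ)) :=
    tendsto_nhdsWithin_iff.mpr ⟨(tendsto_const_nhds.add tendsto_id).mono_left nhdsWithin_le_nhds,
      eventually_mem_nhdsWithin.mono fun t (ht : θ ≤ t) => add_le_add_right ht _⟩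
  have hfloor : ∀ᶠ t in 𝓝[≥] θ, ⌊n * α + t⌋ = ⌊n * α + θ⌋ :=
    tendsto_pure.mp ((tendsto_floor_right_pure_floor _).comp hadd)
  have hite (t : ℝ) : sturmian α t n = if 1 - α ≤ Int.fract (n * α + t) then 1 else 0 := by
    simp only [sturmian, Set.mem_Ico, Int.fract_lt_one, and_true]
  rcases le_or_gt (1 - α) (Int.fract (n * α + θ)) with h | h
  · filter_upwards [hfloor, eventually_mem_nhdsWithin] with t hft (ht : θ ≤ t)
    have hle : 1 - α ≤ Int.fract (n * α + t) := by
      rw [Int.fract, hft]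
      exact h.trans (by rw [Int.fract]; linarith)
    rw [hite, hite, if_pos h, if_pos hle]
  · have hcont : ∀ᶠ t in 𝓝[≥] θ, n * α + t - ⌊n * α + θ⌋ < 1 - α :=
      nhdsWithin_le_nhds (ContinuousAt.eventually_lt (f := fun t => n * α + t - ⌊n * α + θ⌋)
        (by fun_prop) continuousAt_const h)
    filter_upwards [hfloor, hcont] with t hft ht
    have hlt : Int.fract (n * α + t) < 1 - α := by rwa [Int.fract, hft]
    rw [hite, hite, if_neg h.not_ge, if_neg hlt.not_ge]

theorem exists_sturmian_shift_eq (hirr : Irrational α) (θ₀ θ : ℝ) (s : Finset ℤ) (N : ℕ) :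
    ∃ p ≥ N, ∀ n ∈ s, sturmian α θ₀ (n + p) = sturmian α θ n := by
  have hright : ∀ᶠ t in 𝓝[>] θ, ∀ n ∈ s, sturmian α t n = sturmian α θ n :=
    ((eventually_all_finset s).mpr fun n _ => eventually_sturmian_eq α θ n).filter_mono
      (nhdsWithin_mono θ Set.Ioi_subset_Ici_self)
  obtain ⟨x, hx, hθx⟩ :=
    ((eventually_eventually_nhdsWithin.mpr hright).and eventually_mem_nhdsWithin).exists
  rw [isOpen_Ioi.nhdsWithin_eq hθx] at hx
  have hU : {t | ∀ n ∈ s, sturmian α (θ₀ + t) n = sturmian α θ n} ∈ 𝓝 (x - θ₀) :=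
    (continuous_const.add continuous_id).tendsto' (x - θ₀) x (by simp) |>.eventually hx
  obtain ⟨p, hp, k, hk⟩ :=
    frequently_atTop.mp (frequently_natCast_mul_add_intCast_mem hirr hU) N
  refine ⟨p, hp, fun n hn => ?_⟩
  rw [sturmian_add_natCast, ← hk n hn, ← add_assoc, sturmian_add_intCast]

end Recurrence

section SelfAdjoint

variable {𝕜 V : Type*} [RCLike 𝕜] [NormedAddCommGroup V] [InnerProductSpace 𝕜 V] {e ε : ℝ}

theorem isUnit_of_isSelfAdjoint_of_forall_mul_norm_le [CompleteSpace V] {A : V →L[𝕜] V}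
    (hA : IsSelfAdjoint A) (hε : 0 < ε) (hbound : ∀ u, ε * ‖u‖ ≤ ‖A u‖) : IsUnit A := by
  have hsq : IsUnit (A * A) := by
    refine ContinuousLinearMap.isUnit_of_forall_le_norm_inner_map (A * A) (c := ⟨ε, hε.le⟩ ^ 2)
      (pow_pos hε 2) fun u => ?_
    have hinner : inner 𝕜 ((A * A) u) u = inner 𝕜 (A u) (A u) :=
      (ContinuousLinearMap.isSelfAdjoint_iff_isSymmetric.mp hA) (A u) u
    calc ‖u‖ ^ 2 * ε ^ 2 = (ε * ‖u‖) ^ 2 := by ring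
      _ ≤ ‖A u‖ ^ 2 := by gcongr; exact hbound u
      _ = ‖inner 𝕜 ((A * A) u) u‖ := by
        rw [hinner, inner_self_eq_norm_sq_to_K, norm_pow, RCLike.norm_ofReal, abs_norm]
  exact ((Commute.refl A).isUnit_mul_iff.mp hsq).1

theorem exists_norm_apply_sub_smul_lt [CompleteSpace V] {T : V →L[𝕜] V} (hT : IsSelfAdjoint T)
    (he : (e : 𝕜) ∈ spectrum 𝕜 T) (hε : 0 < ε) : ∃ u, ‖T u - (e : 𝕜) • u‖ < ε * ‖u‖ := by
  by_contra! hbound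
  refine spectrum.mem_iff.mp he (isUnit_of_isSelfAdjoint_of_forall_mul_norm_le ?_ hε fun u => ?_)
  · exact (IsSelfAdjoint.algebraMap _ (RCLike.conj_ofReal e)).sub hT
  · rw [sub_apply, norm_sub_rev, Algebra.algebraMap_eq_smul_one]
    exact hbound u

theorem exists_hasEigenvalue_of_norm_apply_sub_smul_lt [FiniteDimensional 𝕜 V] {T : V →ₗ[𝕜] V}
    (hT : T.IsSymmetric) {u : V} (hu : ‖T u - (e : 𝕜) • u‖ < ε * ‖u‖) :
    ∃ μ : ℝ, |μ - e| < ε ∧ Module.End.HasEigenvalue T (μ : 𝕜) := by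
  have hε : 0 < ε := pos_of_mul_pos_left ((norm_nonneg _).trans_lt hu) (norm_nonneg u)
  set b := hT.eigenvectorBasis rfl
  set μ := hT.eigenvalues rfl
  suffices ∃ i, |μ i - e| < ε from
    let ⟨i, hi⟩ := this
    ⟨μ i, hi, hT.hasEigenvalue_eigenvalues rfl i⟩
  by_contra! hfar
  have hcoord (i) : ε ^ 2 * ‖b.repr u i‖ ^ 2 ≤ ‖b.repr (T u - (e : 𝕜) • u) i‖ ^ 2 := by
    have hdiag : b.repr (T u - (e : 𝕜) • u) i = ((μ i - e : ℝ) : 𝕜) * b.repr u i := by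
      rw [map_sub, map_smul, PiLp.sub_apply, PiLp.smul_apply, smul_eq_mul,
        hT.eigenvectorBasis_apply_self_apply rfl, RCLike.ofReal_sub, sub_mul]
    rw [hdiag, norm_mul, mul_pow, RCLike.norm_ofReal]
    gcongr
    exact hfar i
  refine hu.not_ge (le_of_sq_le_sq ?_ (norm_nonneg _))
  rw [mul_pow, ← b.repr.norm_map u, ← b.repr.norm_map (T u - _), EuclideanSpace.norm_sq_eq,
    EuclideanSpace.norm_sq_eq, Finset.mul_sum]
  exact Finset.sum_le_sum fun i _ => hcoord i

end SelfAdjoint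

section SquareSummable

variable {ι κ : Type*}

theorem norm_sq_eq_tsum (u : lp (fun _ : ι => ℂ) 2) : ‖u‖ ^ 2 = ∑' n, ‖u n‖ ^ 2 := by
  simpa using lp.norm_rpow_eq_tsum (p := 2) (by simp) u

theorem summable_inner_comp (u w : lp (fun _ : ι => ℂ) 2) {f g : κ → ι}
    (hf : f.Injective) (hg : g.Injective) : Summable fun n => inner ℂ (u (f n)) (w (g n)) := by
  have hsq (u : lp (fun _ : ι => ℂ) 2) : Summable fun n => ‖u n‖ ^ 2 := by
    simpa using (lp.memℓp u).summable (by simp)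
  refine .of_norm_bounded (((hsq u).comp_injective hf).add ((hsq w).comp_injective hg)) fun n => ?_
  refine (norm_inner_le_norm _ _).trans ?_
  simp only [Function.comp_apply]
  nlinarith [two_mul_le_add_sq ‖u (f n)‖ ‖w (g n)‖, sq_nonneg ‖u (f n)‖, sq_nonneg ‖w (g n)‖]

end SquareSummable

section Schrodinger

variable {G : Type*} [AddGroupWithOne G]

/-- The difference expression `u(n + 1) + u(n - 1) + V(n) u(n)` of the discrete Schrödinger
operator with potential `V`. It is used over `G = ℤ` and, for periodic potentials, over
`G = ZMod q`. -/
def schrodinger (V : G → ℝ) (u : G → ℂ) (n : G) : ℂ := u (n + 1) + u (n - 1) + V n * u n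

theorem schrodinger_add (V : G → ℝ) (u w : G → ℂ) :
    schrodinger V (u + w) = schrodinger V u + schrodinger V w := by
  funext n
  simp only [schrodinger, Pi.add_apply]
  ring

theorem schrodinger_smul (V : G → ℝ) (r : ℂ) (u : G → ℂ) :
    schrodinger V (r • u) = r • schrodinger V u := by
  funext n
  simp only [schrodinger, Pi.smul_apply, smul_eq_mul]
  ring

theorem schrodinger_comp_add_right (V : ℤ → ℝ) (u : ℤ → ℂ) (k n : ℤ) :
    schrodinger (fun n => V (n + k)) (fun n => u (n + k)) n = schrodinger V u (n + k) := by
  simp only [schrodinger, add_right_comm n 1 k, sub_add_eq_add_sub]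

theorem schrodinger_congr {V W : G → ℝ} {u : G → ℂ} (h : ∀ n, u n ≠ 0 → V n = W n) :
    schrodinger V u = schrodinger W u := by
  funext n
  rcases eq_or_ne (u n) 0 with hn | hn
  · simp only [schrodinger, hn, mul_zero]
  · simp only [schrodinger, h n hn]

theorem isSymmetric_of_coe_eq_schrodinger {V : G → ℝ}
    {H : lp (fun _ : G => ℂ) 2 →ₗ[ℂ] lp (fun _ : G => ℂ) 2} (hH : ∀ u, ⇑(H u) = schrodinger V u) :
    H.IsSymmetric := by
  intro u w
  have hadd := summable_inner_comp u w (add_left_injective 1) Function.injective_id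
  have hsub := summable_inner_comp u w sub_left_injective Function.injective_id (f := (· - 1))
  have hadd' := summable_inner_comp u w Function.injective_id (add_left_injective 1)
  have hsub' := summable_inner_comp u w Function.injective_id sub_left_injective (g := (· - 1))
  have hpot : Summable fun n => inner ℂ (u n) (V n * w n) := by
    have := (lp.summable_inner (𝕜 := ℂ) u (H w)).sub (hadd'.add hsub')
    refine this.congr fun n => ?_
    simp only [hH, schrodinger, inner_add_right, id, add_sub_cancel_left]
  have hpot' (n : G) : inner ℂ (V n * u n) (w n) = inner ℂ (u n) (V n * w n) := by
    simp only [RCLike.inner_apply, map_mul, Complex.conj_ofReal]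
    ring
  have haddr : ∑' n, inner ℂ (u (n + 1)) (w n) = ∑' n, inner ℂ (u n) (w (n - 1)) := by
    simpa using (Equiv.addRight (1 : G)).tsum_eq fun n => inner ℂ (u n) (w (n - 1))
  have hsubr : ∑' n, inner ℂ (u (n - 1)) (w n) = ∑' n, inner ℂ (u n) (w (n + 1)) := by
    simpa using (Equiv.subRight (1 : G)).tsum_eq fun n => inner ℂ (u n) (w (n + 1))
  simp only [id] at hadd hsub hadd' hsub'
  simp only [lp.inner_eq_tsum, hH, schrodinger, inner_add_left, inner_add_right, hpot']
  rw [(hadd.add hsub).tsum_add hpot, hadd.tsum_add hsub, (hadd'.add hsub').tsum_add hpot,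
    hadd'.tsum_add hsub', haddr, hsubr, add_comm (∑' n, inner ℂ (u n) (w (n - 1)))]

variable [Finite G]

theorem exists_eigenfunction_of_tsum_lt {V : G → ℝ} {u : G → ℂ} {e ε : ℝ} (hε : 0 < ε)
    (hu : ∑' n, ‖schrodinger V u n - e * u n‖ ^ 2 < ε ^ 2 * ∑' n, ‖u n‖ ^ 2) :
    ∃ μ : ℝ, |μ - e| < ε ∧ ∃ φ ≠ 0, ∀ n, schrodinger V φ n = μ * φ n := by
  have : Fintype G := Fintype.ofFinite G
  let T : lp (fun _ : G => ℂ) 2 →ₗ[ℂ] lp (fun _ : G => ℂ) 2 :=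
    { toFun := fun u => ⟨schrodinger V u, .all _⟩
      map_add' := fun u w => lp.ext (schrodinger_add V u w)
      map_smul' := fun r u => lp.ext (schrodinger_smul V r u) }
  have : FiniteDimensional ℂ (lp (fun _ : G => ℂ) 2) :=
    (lpPiLpₗᵢ (fun _ : G => ℂ) ℂ (p := 2)).symm.toLinearEquiv.finiteDimensional
  let u' : lp (fun _ : G => ℂ) 2 := ⟨u, .all _⟩
  have hlt : ‖T u' - (e : ℂ) • u'‖ < ε * ‖u'‖ := by
    refine lt_of_pow_lt_pow_left₀ 2 (by positivity) ?_
    rwa [mul_pow, norm_sq_eq_tsum, norm_sq_eq_tsum]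
  obtain ⟨μ, hμ, hT⟩ :=
    exists_hasEigenvalue_of_norm_apply_sub_smul_lt (isSymmetric_of_coe_eq_schrodinger
      (H := T) fun _ => rfl) hlt
  obtain ⟨φ, hφ⟩ := hT.exists_hasEigenvector
  refine ⟨μ, hμ, φ, fun h => hφ.2 (Subtype.ext h), fun n => ?_⟩
  exact congrArg (fun w : lp (fun _ : G => ℂ) 2 => w n) hφ.apply_eq_smul

end Schrodinger

section Periodic

variable {lam : ℝ} {E : ℂ}

theorem trace_eq_two_of_mulVec_eq_self {K : Type*} [Field K] {A : Matrix (Fin 2) (Fin 2) K}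
    {x : Fin 2 → K} (hdet : A.det = 1) (hx : x ≠ 0) (hA : A.mulVec x = x) : A.trace = 2 := by
  have hker : (A - 1).det = 0 :=
    Matrix.exists_mulVec_eq_zero_iff.mp ⟨x, hx, by rw [Matrix.sub_mulVec, hA, Matrix.one_mulVec,
      sub_self]⟩
  simp only [Matrix.det_fin_two, Matrix.sub_apply, Matrix.one_apply_eq, ne_eq, zero_ne_one,
    one_ne_zero, not_false_eq_true, Matrix.one_apply_ne, sub_zero] at hker hdet
  rw [Matrix.trace_fin_two]
  linear_combination hdet - hker

theorem transferT_mulVec (a : ℝ) (x y : ℂ) :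
    (transferT lam E a).mulVec ![x, y] = ![(E - lam * a) * x - y, x] := by
  ext i
  fin_cases i <;> simp [transferT, sub_eq_add_neg, mul_comm]

theorem transferM_mulVec {G : Type*} [AddGroupWithOne G] {v : G → ℝ} {φ : G → ℂ}
    (hφ : ∀ n, schrodinger (lam • v) φ n = E * φ n) (n : ℕ) :
    (transferM lam E ((List.range n).map fun k : ℕ => v k)).mulVec ![φ 0, φ (-1)] =
      ![φ n, φ (n - 1)] := by
  induction n with
  | zero => simp [transferM]
  | succ n ih =>
    have hstep : (E - lam * v n) * φ n - φ (n - 1) = φ (n + 1) := by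
      have := hφ n
      simp only [schrodinger, Pi.smul_apply, smul_eq_mul, Complex.ofReal_mul] at this
      linear_combination -this
    rw [List.range_succ, List.map_append, transferM_append, ← Matrix.mulVec_mulVec, ih,
      List.map_singleton, transferM, transferM, one_mul, transferT_mulVec, hstep, Nat.cast_succ,
      add_sub_cancel_right]

theorem trace_transferM_eq_two {q : ℕ} [NeZero q] {v : ZMod q → ℝ} {φ : ZMod q → ℂ} (hne : φ ≠ 0)
    (hφ : ∀ c, schrodinger (lam • v) φ c = E * φ c) :
    (transferM lam E ((List.range q).map fun k : ℕ => v k)).trace = 2 := by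
  refine trace_eq_two_of_mulVec_eq_self (det_transferM lam E _)
    (x := ![φ 0, φ (-1)]) (fun hzero => hne (funext fun c => ?_)) ?_
  · have hc := transferM_mulVec hφ c.val
    rw [hzero, Matrix.mulVec_zero, ZMod.natCast_zmod_val] at hc
    exact (congrFun hc 0).symm
  · rw [transferM_mulVec hφ, ZMod.natCast_self, zero_sub]

end Periodic

section PeriodicApproximation

theorem apply_val_add_one {β : Type*} {q : ℕ} [NeZero q] {f : ℤ → β} (hf : f 0 = f q) (c : ZMod q) :
    f (c + 1).val = f (c.val + 1) := by
  have hc : c + 1 = ((c.val + 1 : ℕ) : ZMod q) := by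
    rw [Nat.cast_succ, ZMod.natCast_zmod_val]
  rcases (Nat.succ_le_of_lt c.val_lt).lt_or_eq with h | h
  · rw [hc, ZMod.val_natCast_of_lt h, Nat.cast_succ]
  · have hwrap : (q : ℤ) = c.val + 1 := by rw [← Nat.cast_succ, h]
    rw [hc, ← Nat.succ_eq_add_one, h, ZMod.natCast_self, ZMod.val_zero, Nat.cast_zero, hf, hwrap]

theorem apply_val_sub_one {β : Type*} {q : ℕ} [NeZero q] {f : ℤ → β} (hf : f (-1) = f (q - 1))
    (c : ZMod q) : f (c - 1).val = f (c.val - 1) := by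
  have h := apply_val_add_one (f := fun n => f (n - 1)) (by simpa using hf) (c - 1)
  simpa using h.symm

variable {q : ℕ} [NeZero q] {v : ℤ → ℝ} {u : ℤ → ℂ}

theorem schrodinger_comp_val (hzero : u 0 = u q) (hneg : u (-1) = u (q - 1)) (c : ZMod q) :
    schrodinger (fun c : ZMod q => v c.val) (fun c : ZMod q => u c.val) c =
      schrodinger v u c.val := by
  simp only [schrodinger, apply_val_add_one hzero, apply_val_sub_one hneg]

theorem tsum_comp_val {f : ℤ → ℝ} (hf : ∀ n ∉ Set.Ico (0 : ℤ) q, f n = 0) :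
    ∑' c : ZMod q, f c.val = ∑' n, f n := by
  have hinj : Function.Injective fun c : ZMod q => (c.val : ℤ) :=
    Nat.cast_injective.comp (ZMod.val_injective q)
  refine hinj.tsum_eq (Function.support_subset_iff'.mpr fun n hn => hf n fun hmem => hn ?_)
  obtain ⟨n, rfl⟩ := Int.eq_ofNat_of_zero_le hmem.1
  exact ⟨n, by simp only [ZMod.val_natCast_of_lt (Nat.cast_lt.mp hmem.2)]⟩

theorem exists_trace_transferM_eq_two_of_tsum_lt {lam e ε : ℝ} (hε : 0 < ε)
    (hout : ∀ n ∉ Set.Ioo (0 : ℤ) (q - 1), u n = 0)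
    (hu : ∑' n, ‖schrodinger (lam • v) u n - e * u n‖ ^ 2 < ε ^ 2 * ∑' n, ‖u n‖ ^ 2) :
    ∃ μ : ℝ, |μ - e| < ε ∧ (transferM lam μ ((List.range q).map fun k : ℕ => v k)).trace = 2 := by
  simp only [Set.mem_Ioo] at hout
  have hcyc (c : ZMod q) := schrodinger_comp_val (v := lam • v) (u := u)
    (by rw [hout _ (by omega), hout _ (by omega)]) (by rw [hout _ (by omega), hout _ (by omega)]) c
  have hmass : ∑' c : ZMod q, ‖u c.val‖ ^ 2 = ∑' n, ‖u n‖ ^ 2 := by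
    refine tsum_comp_val (f := fun n => ‖u n‖ ^ 2) fun n hn => ?_
    rw [Set.mem_Ico] at hn
    rw [hout n (by omega), norm_zero, zero_pow two_ne_zero]
  have hres : ∑' c : ZMod q, ‖schrodinger (fun c : ZMod q => lam * v c.val)
      (fun c => u c.val) c - e * u c.val‖ ^ 2 =
      ∑' n, ‖schrodinger (lam • v) u n - e * u n‖ ^ 2 := by
    rw [← tsum_comp_val (q := q)]
    · exact tsum_congr fun c => by rw [← hcyc]; rfl
    · intro n hn
      rw [Set.mem_Ico] at hn
      simp [schrodinger, hout n (by omega), hout (n + 1) (by omega), hout (n - 1) (by omega)]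
  obtain ⟨μ, hμ, φ, hne, hφ⟩ := exists_eigenfunction_of_tsum_lt hε (hmass.symm ▸ hres ▸ hu)
  refine ⟨μ, hμ, ?_⟩
  rw [← trace_transferM_eq_two hne (v := fun c => v c.val) hφ]
  congr 2
  refine List.map_congr_left fun k hk => ?_
  rw [ZMod.val_natCast_of_lt (List.mem_range.mp hk)]

end PeriodicApproximation

section Spectrum

open Filter

theorem dense_setOf_finite_support {ι : Type*} {p : ENNReal} [Fact (1 ≤ p)] (hp : p ≠ ⊤)
    {F : Type*} [NormedAddCommGroup F] :
    Dense {u : lp (fun _ : ι => F) p | (Function.support u).Finite} := by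
  classical
  intro u
  refine mem_closure_of_tendsto (lp.hasSum_single hp u) (.of_forall fun s => ?_)
  refine s.finite_toSet.subset (Function.support_subset_iff'.mpr fun n hn => ?_)
  rw [lp.coeFn_sum, Finset.sum_apply]
  exact Finset.sum_eq_zero fun i hi => lp.single_apply_ne _ _ _ (by rintro rfl; exact hn hi)

variable {lam α θ : ℝ} {H : lp (fun _ : ℤ => ℂ) 2 →L[ℂ] lp (fun _ : ℤ => ℂ) 2}

theorem isSelfAdjoint_of_coe_eq_schrodinger {V : ℤ → ℝ} (hH : ∀ u, ⇑(H u) = schrodinger V u) :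
    IsSelfAdjoint H :=
  ContinuousLinearMap.isSelfAdjoint_iff_isSymmetric.mpr (isSymmetric_of_coe_eq_schrodinger hH)

theorem exists_finite_support_tsum_lt {V : ℤ → ℝ} (hH : ∀ u, ⇑(H u) = schrodinger V u) {e : ℝ}
    (he : (e : ℂ) ∈ spectrum ℂ H) {ε : ℝ} (hε : 0 < ε) : ∃ u : ℤ → ℂ, (Function.support u).Finite ∧
      ∑' n, ‖schrodinger V u n - e * u n‖ ^ 2 < ε ^ 2 * ∑' n, ‖u n‖ ^ 2 := by
  obtain ⟨u, hfin, hu⟩ := (dense_setOf_finite_support (by simp)).exists_mem_open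
    (isOpen_lt (f := fun u => ‖H u - (e : ℂ) • u‖) (g := fun u => ε * ‖u‖) (by fun_prop)
      (by fun_prop)) (exists_norm_apply_sub_smul_lt (isSelfAdjoint_of_coe_eq_schrodinger hH) he hε)
  refine ⟨u, hfin, ?_⟩
  have hsq : ‖H u - (e : ℂ) • u‖ ^ 2 < (ε * ‖u‖) ^ 2 := by gcongr; exact hu
  rw [mul_pow, norm_sq_eq_tsum, norm_sq_eq_tsum] at hsq
  simpa only [lp.coeFn_sub, lp.coeFn_smul, Pi.sub_apply, Pi.smul_apply, smul_eq_mul, hH] using hsq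

theorem eventually_exists_trace_sWord_eq_two (hirr : Irrational α) (hα : α ∈ Set.Ioo 0 1)
    (hH : ∀ u, ⇑(H u) = schrodinger (lam • sturmian α θ) u) {e : ℝ}
    (he : (e : ℂ) ∈ spectrum ℂ H) {ε : ℝ} (hε : 0 < ε) :
    ∀ᶠ m in atTop, ∃ μ : ℝ, |μ - e| < ε ∧
      (transferM lam μ (sWord (cfCoeff α) (m + 2))).trace = 2 := by
  obtain ⟨u, hfin, hu⟩ := exists_finite_support_tsum_lt hH he hε
  obtain ⟨R, hR⟩ := (hfin.image Int.natAbs).bddAbove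
  obtain ⟨p, hp, hwindow⟩ := exists_sturmian_shift_eq hirr 0 θ hfin.toFinset (R + 2)
  simp only [Set.Finite.mem_toFinset, Function.mem_support] at hwindow
  have hlength := tendsto_atTop.mp ((isContinuant_length_sWord hirr).tendsto_atTop.comp
    (tendsto_add_atTop_nat 1)) (p + R + 3)
  filter_upwards [hlength] with m (hm : p + R + 3 ≤ (sWord (cfCoeff α) (m + 2)).length)
  rw [sWord_eq_map_sturmian hirr hα]
  set q := (sWord (cfCoeff α) (m + 2)).length
  have : NeZero q := ⟨by omega⟩
  have hpotential : schrodinger (lam • fun n => sturmian α 0 (n + 1)) (fun n => u (n + (1 - p))) =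
      schrodinger (fun n => (lam • sturmian α θ) (n + (1 - p))) (fun n => u (n + (1 - p))) :=
    schrodinger_congr fun n hn => by
      have := hwindow _ hn
      rw [show n + (1 - p) + p = n + 1 by ring] at this
      simp [this]
  refine exists_trace_transferM_eq_two_of_tsum_lt (v := fun n => sturmian α 0 (n + 1))
    (u := fun n => u (n + (1 - p))) hε ?_ ?_
  · intro n hn
    by_contra hne
    have := hR (Set.mem_image_of_mem _ hne)
    refine hn ⟨?_, ?_⟩ <;> omega
  · simp only [hpotential, schrodinger_comp_add_right]
    have hmass := (Equiv.addRight (1 - p : ℤ)).tsum_eq fun n => ‖u n‖ ^ 2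
    have hres := (Equiv.addRight (1 - p : ℤ)).tsum_eq
      fun n => ‖schrodinger (lam • sturmian α θ) u n - e * u n‖ ^ 2
    rw [← hmass, ← hres] at hu
    exact hu

theorem not_escapes_of_mem_spectrum (hirr : Irrational α) (hα : α ∈ Set.Ioo 0 1)
    (hH : ∀ u, ⇑(H u) = schrodinger (lam • sturmian α θ) u) {E : ℂ} (hE : E ∈ spectrum ℂ H)
    {n p : ℕ} (hp : p < cfCoeff α (n + 2)) :
    ¬Escapes (fun k => transferM lam E (sWord (cfCoeff α) (k + 1))) n p := by
  intro hesc
  have hreal : E = E.re := (isSelfAdjoint_of_coe_eq_schrodinger hH).mem_spectrum_eq_re hE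
  obtain ⟨ε, hε, hball⟩ := Metric.isOpen_iff.mp (isOpen_setOf_escapes
    (M := fun (E : ℂ) k => transferM lam E (sWord (cfCoeff α) (k + 1)))
    (fun k => continuous_transferM lam (sWord (cfCoeff α) (k + 1))) n p) E hesc
  obtain ⟨k, hk⟩ := eventually_atTop.mp
    (eventually_exists_trace_sWord_eq_two hirr hα hH (hreal ▸ hE) hε)
  obtain ⟨μ, hμ, htrace⟩ := hk (n + k) (Nat.le_add_left k n)
  have hμE : (μ : ℂ) ∈ Metric.ball E ε := by
    rwa [hreal, mem_ball_iff_norm, ← Complex.ofReal_sub, Complex.norm_real]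
  have hescμ : Escapes (fun k => transferM lam μ (sWord (cfCoeff α) (k + 1))) n p := hball hμE
  have hgrow := hescμ.two_lt_norm_trace (isStandardProduct_transferM lam μ (cfCoeff α))
    (isContinuant_length_sWord hirr).coeff_pos hp k
  rw [show n + 1 + k + 1 = n + k + 2 by ring, htrace] at hgrow
  norm_num at hgrow

end Spectrum

end Sturmian

theorem lyapunov_zero_along_sWords
    (lam : ℝ) (hlam : lam ≠ 0) (α : ℝ) (hirr : Irrational α) (hα : α ∈ Set.Ioo (0 : ℝ) 1)
    (θ' : ℝ) (hθ' : θ' ∈ Set.Ico (0 : ℝ) 1)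
    (H : lp (fun _ : ℤ => ℂ) 2 →L[ℂ] lp (fun _ : ℤ => ℂ) 2)
    (hH : (∀ u : lp (fun _ : ℤ => ℂ) 2, ∀ n : ℤ,
      H u n = u (n + 1) + u (n - 1) + (lam * sturmian α θ' n : ℝ) * u n))
    (E : ℂ) (hE : E ∈ spectrum ℂ H) :
    Filter.Tendsto
      (fun n : ℕ => (1 / (sWord (cfCoeff α) (n + 1)).length : ℝ) *
        Real.log (opNorm (transferM lam E (sWord (cfCoeff α) (n + 1)))))
      Filter.atTop (nhds 0) := by
  have hschrodinger (u) : ⇑(H u) = Sturmian.schrodinger (lam • sturmian α θ') u :=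
    funext (hH u)
  have hM := Sturmian.isStandardProduct_transferM lam E (cfCoeff α)
  have hQ := Sturmian.isContinuant_length_sWord hirr
  obtain ⟨B, hB⟩ := hM.exists_norm_trace_le hQ.coeff_pos fun n p =>
    Sturmian.not_escapes_of_mem_spectrum hirr hα hschrodinger hE
  refine (hM.tendsto_log_norm_div hQ hB).congr fun n => ?_
  rw [opNorm, ← Matrix.cstar_norm_def, one_div, inv_mul_eq_div]
end

section
/- For every n ≥ 2 there exists a palindrome π_n over {0,1} such that s_n = π_n·10 if n is even and s_n = π_n·01 if n is odd. -/
open scoped Classical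

/-!
Two consecutive standard words almost commute: `s_n s_{n-1}` and `s_{n-1} s_n` agree except that
their last two letters, which are distinct, are exchanged, and the common prefix `r` is a
palindrome. Passing from `(x, y)` to `(x, xy)` replaces `r` by `xr`, so this survives the induction
only if `xr` and `yr` are required to be palindromes as well; the enlarged property is then stable
under `(x, y) ↦ (x, xy)` and, up to exchanging the two letters, under `(x, y) ↦ (y, x)`. These
moves generate all pairs `(s_n, s_{n-1})` from `(0, 1)`, with one exchange for each `n`. Finally
`s_n = s_{n-1} · (s_{n-1}^{a_n - 1} s_{n-2})` is itself the product of a pair with this property.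
-/

section StandardPair

variable {A : Type*} {r x y : List A} {u v : A}

theorem palindrome_append_append_append (hr : r.Palindrome) (hx : (x ++ r).Palindrome)
    (hy : (y ++ r).Palindrome) : (x ++ (y ++ (x ++ r))).Palindrome := by
  have hx' : r ++ x.reverse = x ++ r := by simpa [hr.reverse_eq] using hx.reverse_eq
  have hy' : r ++ y.reverse = y ++ r := by simpa [hr.reverse_eq] using hy.reverse_eq
  refine .of_reverse_eq ?_
  calc (x ++ (y ++ (x ++ r))).reverse
      = (r ++ x.reverse) ++ y.reverse ++ x.reverse := by simp [hr.reverse_eq]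
    _ = x ++ (r ++ y.reverse) ++ x.reverse := by simp [hx']
    _ = x ++ (y ++ (r ++ x.reverse)) := by simp [hy']
    _ = x ++ (y ++ (x ++ r)) := by rw [hx']

/-- A standard pair `(x, y)` with central word `r` and final letters `u`, `v`: the words `xy` and
`yx` are `r` followed by `uv` and by `vu`, and `r`, `xr`, `yr` are palindromes. The conditions on
`xr` and `yr` make the notion stable under `(x, y) ↦ (x, xy)`; the letters `u` and `v` need not be
distinct. -/
structure IsStandardPair (r x y : List A) (u v : A) : Prop where
  palindrome : r.Palindrome
  palindrome_left : (x ++ r).Palindrome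
  palindrome_right : (y ++ r).Palindrome
  append_eq : x ++ y = r ++ [u, v]
  append_swap_eq : y ++ x = r ++ [v, u]

namespace IsStandardPair

theorem singleton (u v : A) : IsStandardPair [] [u] [v] u v :=
  ⟨.nil, .singleton u, .singleton v, rfl, rfl⟩

theorem swap (h : IsStandardPair r x y u v) : IsStandardPair r y x v u :=
  ⟨h.palindrome, h.palindrome_right, h.palindrome_left, h.append_swap_eq, h.append_eq⟩

theorem append_right (h : IsStandardPair r x y u v) :
    IsStandardPair (x ++ r) x (x ++ y) u v where
  palindrome := h.palindrome_left
  palindrome_left :=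
    palindrome_append_append_append (y := []) h.palindrome h.palindrome_left h.palindrome
  palindrome_right := by
    simpa using palindrome_append_append_append h.palindrome h.palindrome_left h.palindrome_right
  append_eq := by rw [h.append_eq, List.append_assoc]
  append_swap_eq := by rw [List.append_assoc, h.append_swap_eq, List.append_assoc]

theorem flatten_replicate_append (h : IsStandardPair r x y u v) (k : ℕ) :
    IsStandardPair ((List.replicate k x).flatten ++ r) x ((List.replicate k x).flatten ++ y)
      u v := by
  induction k with
  | zero => exact h
  | succ k ih => simpa [List.replicate_succ] using ih.append_right

end IsStandardPair

end StandardPair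

theorem exists_sWord_add_two_eq (a : ℕ → ℕ) (m : ℕ) :
    ∃ k, sWord a (m + 2) = (List.replicate k (sWord a (m + 1))).flatten ++ sWord a m := by
  cases m with
  | zero => exact ⟨a 1 - 1, by simp [sWord]⟩
  | succ m => exact ⟨a (m + 2), rfl⟩

theorem exists_isStandardPair_sWord (a : ℕ → ℕ) (m : ℕ) :
    ∃ r, IsStandardPair r (sWord a (m + 1)) (sWord a m)
      ((m % 2 : ℕ) : ℝ) (((m + 1) % 2 : ℕ) : ℝ) := by
  induction m with
  | zero => exact ⟨[], by simpa [sWord] using IsStandardPair.singleton (0 : ℝ) 1⟩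
  | succ m ih =>
    obtain ⟨r, hr⟩ := ih
    obtain ⟨k, hk⟩ := exists_sWord_add_two_eq a m
    refine ⟨(List.replicate k (sWord a (m + 1))).flatten ++ r, ?_⟩
    rw [hk, Nat.add_mod_right m 2]
    exact (hr.flatten_replicate_append k).swap

theorem sWord_eq_palindrome_append_general (a : ℕ → ℕ) {n : ℕ} (hn : 2 ≤ n) (ha : 0 < a n) :
    ∃ π : List ℝ, π.reverse = π ∧
      (Even n → sWord a (n + 1) = π ++ [1, 0]) ∧
      (Odd n → sWord a (n + 1) = π ++ [0, 1]) := by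
  obtain ⟨m, rfl⟩ := Nat.exists_eq_add_of_le' hn
  obtain ⟨k, hk⟩ := Nat.exists_eq_add_of_lt ha
  obtain ⟨r, hr⟩ := exists_isStandardPair_sWord a (m + 1)
  have hpair := hr.flatten_replicate_append k
  refine ⟨_, hpair.palindrome.reverse_eq, ?_⟩
  have hs : sWord a (m + 2 + 1) =
      sWord a (m + 2) ++ ((List.replicate k (sWord a (m + 2))).flatten ++ sWord a (m + 1)) := by
    rw [sWord, hk, zero_add, List.replicate_succ, List.flatten_cons, List.append_assoc]
  rw [hs, hpair.append_eq]
  constructor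
  · intro h
    have hodd : Odd (m + 1) := by grind
    simp [Nat.even_iff.mp h, Nat.odd_iff.mp hodd]
  · intro h
    have heven : Even (m + 1) := by grind
    simp [Nat.odd_iff.mp h, Nat.even_iff.mp heven]

theorem irrational_fract {x : ℝ} (hx : Irrational x) : Irrational (Int.fract x) :=
  hx.sub_intCast ⌊x⌋

theorem irrational_cfGauss {α : ℝ} (hα : Irrational α) (n : ℕ) : Irrational (cfGauss α n) := by
  induction n with
  | zero => exact hα
  | succ n ih => exact irrational_fract (irrational_inv_iff.mpr ih)

theorem cfGauss_succ_mem_Ioo {α : ℝ} (hα : Irrational α) (n : ℕ) :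
    cfGauss α (n + 1) ∈ Set.Ioo (0 : ℝ) 1 :=
  ⟨(Int.fract_nonneg _).lt_of_ne' (irrational_cfGauss hα (n + 1)).ne_zero, Int.fract_lt_one _⟩

theorem cfCoeff_pos {α : ℝ} (hα : Irrational α) {n : ℕ} (hn : 2 ≤ n) : 0 < cfCoeff α n := by
  obtain ⟨m, rfl⟩ := Nat.exists_eq_add_of_le' hn
  obtain ⟨hpos, hlt⟩ := cfGauss_succ_mem_Ioo hα m
  exact Nat.floor_pos.mpr ((one_le_inv₀ hpos).mpr hlt.le)

theorem sWord_eq_palindrome_append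
    (α : ℝ) (hirr : Irrational α) (hα : α ∈ Set.Ioo (0 : ℝ) 1)
    (n : ℕ) (hn : 2 ≤ n) :
    ∃ π : List ℝ, π.reverse = π ∧
      (Even n → sWord (cfCoeff α) (n + 1) = π ++ [1, 0]) ∧
      (Odd n → sWord (cfCoeff α) (n + 1) = π ++ [0, 1]) :=
  sWord_eq_palindrome_append_general (cfCoeff α) hn (cfCoeff_pos hirr hn)
end

section
/- For every word w ∈ W_α there exist t ∈ ℕ, a (possibly empty) word x that is a suffix of s_t or of s_{t−1}, and a (possibly empty) word y that is a prefix of s_{t+1}, such that w = x y. -/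
open scoped Classical

/-!
Code a Sturmian sequence as the increments of `h n = ⌊n α + θ⌋`. All that matters about `h` is that
its discrepancy from a line of slope `α` is less than one. If `N m` is the first index at which `h`
reaches `m`, then `N` has the same property with slope `α⁻¹`, hence `m ↦ N m - a₁ m` has it with
slope `α⁻¹ - a₁`, the image of `α` under the Gauss map. Since the gaps of `N` are the return times
of the letter `1`, the original sequence is a concatenation of the words `0^{a₁-1} 1` and
`0^{a₁-1} 1 0`, arranged according to the increments of `m ↦ N m - a₁ m`. Iterating, every factor
of the sequence is, for each `n`, a factor of a concatenation of the words `s_n` and `s_n s_{n-1}`.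

Choose `n` with `|s_{n-1}|` at least the length of the factor `w`. If `w` straddles the boundary of
two blocks, it splits there as required. Otherwise `w` is a factor of `s_{n+1}`, and one descends:
a factor of `s_{m+1}` is a suffix of it or lies in a power of `s_m`, where it either meets a
boundary between two copies of `s_m` or is a factor of `s_m`.
-/

namespace Sturmian

section Words

variable {β γ : Type*}

lemma infix_flatMap_cases {f : γ → List β} {w : List β} {l : List γ} (hw : w ≠ [])
    (h : w <:+: l.flatMap f) :
    (∃ e ∈ l, w <:+: f e) ∨
      ∃ x y e l', e :: l' <:+ l ∧ x <:+ f e ∧ y <+: l'.flatMap f ∧ w = x ++ y := by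
  induction l with
  | nil => exact absurd (List.infix_nil.1 h) hw
  | cons e l ih =>
    rw [List.flatMap_cons, List.infix_append_iff] at h
    rcases h with h | h | ⟨x, y, hxy, hx, hy⟩
    · exact Or.inl ⟨e, List.mem_cons_self, h⟩
    · rcases ih h with ⟨e', he', h⟩ | ⟨x, y, e', l', hl, hsplit⟩
      · exact Or.inl ⟨e', List.mem_cons_of_mem _ he', h⟩
      · exact Or.inr ⟨x, y, e', l', hl.trans (List.suffix_cons e l), hsplit⟩
    · exact Or.inr ⟨x, y, e, l, List.suffix_rfl, hx, hy, hxy⟩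

lemma flatten_replicate_prefix {m n : ℕ} (h : m ≤ n) (T : List β) :
    (List.replicate m T).flatten <+: (List.replicate n T).flatten :=
  List.IsPrefix.flatten (List.prefix_replicate_iff.2 (by simpa using h))

lemma infix_flatten_replicate_succ_cases {w T : List β} {n : ℕ}
    (h : w <:+: (List.replicate (n + 1) T).flatten) :
    w <:+: T ∨ ∃ x y, x <:+ T ∧ y <+: (List.replicate n T).flatten ∧ w = x ++ y := by
  rcases eq_or_ne w [] with rfl | hw
  · exact Or.inl List.nil_infix
  rw [← List.flatMap_id] at h
  rcases infix_flatMap_cases hw h with ⟨A, hA, h⟩ | ⟨x, y, A, L, hL, hx, hy, hxy⟩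
  · rw [List.eq_of_mem_replicate hA] at h
    exact Or.inl h
  · obtain ⟨hlen, hAL⟩ := List.suffix_replicate_iff.1 hL
    rw [List.length_cons, List.replicate_succ, List.cons.injEq] at hAL
    rw [List.length_cons, Nat.succ_le_succ_iff] at hlen
    rw [List.flatMap_id, hAL.2] at hy
    exact Or.inr ⟨x, y, hAL.1 ▸ hx, hy.trans (flatten_replicate_prefix hlen T), hxy⟩

lemma prefix_flatten_replicate_append {R T : List β} (h : R <+: T) (n : ℕ) :
    R <+: (List.replicate n T).flatten ++ R := by
  cases n with
  | zero => simp
  | succ n =>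
    rw [List.replicate_succ, List.flatten_cons, List.append_assoc]
    exact List.prefix_append_of_prefix h

lemma infix_iff_suffix_or_infix_dropLast {w l : List β} :
    w <:+: l ↔ w <:+ l ∨ w <:+: l.dropLast := by
  rcases l.eq_nil_or_concat with rfl | ⟨l, b, rfl⟩
  · simp
  · rw [List.concat_eq_append, List.dropLast_concat, List.infix_concat_iff]

/-- The factor of length `n` of a two-sided sequence that starts at position `k`. -/
def window (v : ℤ → β) (k : ℤ) (n : ℕ) : List β :=
  (List.range n).map fun i : ℕ => v (k + i)

lemma window_one (v : ℤ → β) (k : ℤ) : window v k 1 = [v k] := by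
  simp [window]

lemma window_add (v : ℤ → β) (k : ℤ) (m n : ℕ) :
    window v k (m + n) = window v k m ++ window v (k + m) n := by
  simp [window, List.range_add, Function.comp_def, add_assoc]

lemma window_eq_replicate {v : ℤ → β} {k : ℤ} {n : ℕ} {b : β}
    (h : ∀ j, k ≤ j → j < k + n → v j = b) : window v k n = List.replicate n b := by
  refine List.eq_replicate_iff.2 ⟨by simp [window], fun c hc => ?_⟩
  obtain ⟨i, hi, rfl⟩ := List.mem_map.1 hc
  have := List.mem_range.1 hi
  exact h _ (by omega) (by omega)

lemma window_infix (v : ℤ → β) {k l : ℤ} {m n : ℕ} (hl : l ≤ k) (hr : k + m ≤ l + n) :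
    window v k m <:+: window v l n := by
  obtain ⟨p, rfl⟩ := Int.le.dest hl
  obtain ⟨q, rfl⟩ : ∃ q : ℕ, n = p + m + q := Nat.exists_eq_add_of_le (by omega)
  rw [window_add, window_add]
  exact ⟨_, _, rfl⟩

/-- The sequence `v` is the concatenation of the words `f (u m)`, the `m`-th of which starts at
position `P m`. -/
def IsCutting (f : γ → List β) (u : ℤ → γ) (P : ℤ → ℤ) (v : ℤ → β) : Prop :=
  ∀ m, P (m + 1) = P m + (f (u m)).length ∧ window v (P m) (f (u m)).length = f (u m)

namespace IsCutting

variable {f : γ → List β} {u : ℤ → γ} {P : ℤ → ℤ} {v : ℤ → β}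

lemma apply_add (h : IsCutting f u P v) (m : ℤ) (M : ℕ) :
    P (m + M) = P m + ((window u m M).flatMap f).length := by
  induction M with
  | zero => simp [window]
  | succ M ih =>
    rw [window_add, window_one, List.flatMap_append, List.flatMap_singleton, List.length_append,
      Nat.cast_succ, ← add_assoc, (h _).1, ih]
    push_cast
    ring

lemma window_eq_flatMap (h : IsCutting f u P v) (m : ℤ) (M : ℕ) :
    window v (P m) ((window u m M).flatMap f).length = (window u m M).flatMap f := by
  induction M with
  | zero => simp [window]
  | succ M ih =>
    rw [window_add u, window_one, List.flatMap_append, List.flatMap_singleton, List.length_append,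
      window_add, ih, ← h.apply_add, (h _).2]

lemma window_infix_flatMap (h : IsCutting f u P v) {k m : ℤ} {L M : ℕ} (hl : P m ≤ k)
    (hr : k + L ≤ P (m + M)) : window v k L <:+: (window u m M).flatMap f := by
  rw [← h.window_eq_flatMap]
  exact window_infix v hl (h.apply_add m M ▸ hr)

end IsCutting

end Words

section StandardWords

variable {a : ℕ → ℕ}

/-- The exponent of `s_n` in `s_{n+1}`, so that the recursion for the standard words takes the same
form `sWord_add_two` at every level. -/
def sExponent (a : ℕ → ℕ) : ℕ → ℕ
  | 0 => a 1 - 1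
  | n + 1 => a (n + 2)

lemma sWord_add_two (a : ℕ → ℕ) (n : ℕ) :
    sWord a (n + 2) =
      (List.replicate (sExponent a n) (sWord a (n + 1))).flatten ++ sWord a n := by
  cases n <;> simp [sWord, sExponent]

lemma sWord_add_three (ha : ∀ n, 0 < a n) (n : ℕ) :
    sWord a (n + 3) = sWord a (n + 2) ++
      ((List.replicate (a (n + 2) - 1) (sWord a (n + 2))).flatten ++ sWord a (n + 1)) := by
  obtain ⟨b, hb⟩ := Nat.exists_eq_succ_of_ne_zero (ha (n + 2)).ne'
  rw [sWord, hb, List.replicate_succ, List.flatten_cons, List.append_assoc, Nat.succ_sub_one]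

lemma sWord_suffix_add_two (a : ℕ → ℕ) (n : ℕ) : sWord a n <:+ sWord a (n + 2) :=
  sWord_add_two a n ▸ List.suffix_append _ _

lemma sWord_prefix_succ (ha : ∀ n, 0 < a n) (n : ℕ) : sWord a (n + 2) <+: sWord a (n + 3) :=
  sWord_add_three ha n ▸ List.prefix_append _ _

lemma sWord_ne_nil (a : ℕ → ℕ) : ∀ n, sWord a n ≠ []
  | 0 | 1 => by simp [sWord]
  | n + 2 => (sWord_suffix_add_two a n).ne_nil (sWord_ne_nil a n)

lemma le_length_sWord (ha : ∀ n, 0 < a n) : ∀ n, n ≤ (sWord a (n + 1)).length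
  | 0 => Nat.zero_le _
  | 1 => List.length_pos_of_ne_nil (sWord_ne_nil a 2)
  | n + 2 => by
    have ih : n + 1 ≤ (sWord a (n + 2)).length := le_length_sWord ha (n + 1)
    have hpos := List.length_pos_of_ne_nil (sWord_ne_nil a (n + 1))
    rw [sWord_add_three ha, List.length_append, List.length_append]
    omega

lemma dropLast_sWord_prefix_succ (ha : ∀ n, 0 < a n) :
    ∀ n, (sWord a n).dropLast <+: sWord a (n + 1)
  | 0 | 1 => by simp [sWord]
  | n + 2 => (List.dropLast_prefix _).trans (sWord_prefix_succ ha n)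

lemma dropLast_sWord_prefix_flatten_replicate (ha : ∀ n, 0 < a n) (n : ℕ) :
    (sWord a (n + 2)).dropLast <+:
      (List.replicate (sExponent a n + 1) (sWord a (n + 1))).flatten := by
  rw [sWord_add_two, List.dropLast_append_of_ne_nil (sWord_ne_nil a n), List.replicate_succ',
    List.flatten_append, List.flatten_singleton, List.prefix_append_right_inj]
  exact dropLast_sWord_prefix_succ ha n

/-- The word `w` is a suffix of `s_t` or `s_{t-1}` followed by a prefix of `s_{t+1}`; recall that
`sWord a (t + 1)` is `s_t`. -/
def SplitsAt (a : ℕ → ℕ) (t : ℕ) (w : List ℝ) : Prop :=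
  ∃ x y : List ℝ, (x <:+ sWord a (t + 1) ∨ x <:+ sWord a t) ∧ y <+: sWord a (t + 2) ∧ w = x ++ y

lemma SplitsAt.succ (ha : ∀ n, 0 < a n) {t : ℕ} {w : List ℝ} (h : SplitsAt a t w) :
    SplitsAt a (t + 1) w := by
  obtain ⟨x, y, hx, hy, hxy⟩ := h
  exact ⟨x, y, hx.symm.imp_left (·.trans (sWord_suffix_add_two a t)),
    hy.trans (sWord_prefix_succ ha t), hxy⟩

lemma splitsAt_of_infix_sWord (ha : ∀ n, 0 < a n) {n : ℕ} {w : List ℝ}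
    (h : w <:+: sWord a (n + 1)) : SplitsAt a n w := by
  have splitsAt_of_suffix {n : ℕ} (hw : w <:+ sWord a (n + 1)) : SplitsAt a n w :=
    ⟨w, [], Or.inl hw, List.nil_prefix, (List.append_nil w).symm⟩
  induction n with
  | zero =>
    rcases infix_iff_suffix_or_infix_dropLast.1 h with h | h
    · exact splitsAt_of_suffix h
    · obtain rfl : w = [] := by simpa [sWord] using h
      exact splitsAt_of_suffix List.nil_suffix
  | succ n ih =>
    rcases infix_iff_suffix_or_infix_dropLast.1 h with h | h
    · exact splitsAt_of_suffix h
    replace h := h.trans (dropLast_sWord_prefix_flatten_replicate ha n).isInfix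
    rcases infix_flatten_replicate_succ_cases h with h | ⟨x, y, hx, hy, hxy⟩
    · exact (ih h).succ ha
    · have hy' : y <+: sWord a (n + 2) := sWord_add_two a n ▸ List.prefix_append_of_prefix hy
      exact SplitsAt.succ ha ⟨x, y, Or.inl hx, hy', hxy⟩

/-- The block `s_{n+1} s_n ^ e` of the level-`(n+1)` decomposition of a Sturmian sequence, where `e`
is a letter. -/
noncomputable def blockWord (a : ℕ → ℕ) (n : ℕ) (e : ℝ) : List ℝ :=
  sWord a (n + 2) ++ if e = 1 then sWord a (n + 1) else []

lemma blockWord_prefix_sWord (ha : ∀ n, 0 < a n) (n : ℕ) (e : ℝ) :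
    blockWord a (n + 1) e <+: sWord a (n + 4) := by
  rw [blockWord, sWord_add_three ha (n + 1), List.prefix_append_right_inj]
  split_ifs
  · exact prefix_flatten_replicate_append (sWord_prefix_succ ha n) _
  · exact List.nil_prefix

lemma prefix_of_prefix_flatMap_blockWord {n : ℕ} {u y : List ℝ}
    (h : y <+: u.flatMap (blockWord a n)) (hy : y.length ≤ (sWord a (n + 2)).length) :
    y <+: sWord a (n + 2) := by
  cases u with
  | nil => rw [List.prefix_nil.1 h]; exact List.nil_prefix
  | cons e u =>
    rw [List.flatMap_cons, blockWord, List.append_assoc] at h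
    exact List.prefix_of_prefix_length_le h (List.prefix_append _ _) hy

lemma suffix_of_suffix_blockWord {n : ℕ} {e : ℝ} {x : List ℝ} (h : x <:+ blockWord a n e)
    (hx : x.length ≤ (sWord a (n + 1)).length) : x <:+ sWord a (n + 2) ∨ x <:+ sWord a (n + 1) := by
  rw [blockWord] at h
  split_ifs at h
  · exact Or.inr (List.suffix_of_suffix_length_le h (List.suffix_append _ _) hx)
  · exact Or.inl (by simpa using h)

lemma exists_splitsAt_of_infix_flatMap_blockWord (ha : ∀ n, 0 < a n) {n : ℕ} {u w : List ℝ}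
    (hw : w ≠ []) (hlen : w.length ≤ (sWord a (n + 2)).length)
    (h : w <:+: u.flatMap (blockWord a (n + 1))) : ∃ t, SplitsAt a t w := by
  rcases infix_flatMap_cases hw h with ⟨e, -, h⟩ | ⟨x, y, e, u', -, hx, hy, rfl⟩
  · exact ⟨_, splitsAt_of_infix_sWord ha (h.trans (blockWord_prefix_sWord ha n e).isInfix)⟩
  · rw [List.length_append] at hlen
    have hx' := suffix_of_suffix_blockWord hx ((Nat.le_add_right _ _).trans hlen)
    have hy' := prefix_of_prefix_flatMap_blockWord hy
      ((Nat.le_add_left _ _).trans (hlen.trans (sWord_prefix_succ ha n).length_le))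
    exact ⟨n + 2, x, y, hx', hy'.trans (sWord_prefix_succ ha (n + 1)), rfl⟩

/-- The substitution `e ↦ 0^{c-1} 1 0^e` on the letters `0` and `1` which inverts one step of the
continued fraction algorithm with coefficient `c`. -/
noncomputable def gaussSubst (c : ℕ) (e : ℝ) : List ℝ :=
  List.replicate (c - 1) 0 ++ [1] ++ if e = 1 then [0] else []

lemma length_gaussSubst {c : ℕ} (hc : 0 < c) (e : ℝ) :
    (gaussSubst c e).length = c + if e = 1 then 1 else 0 := by
  rw [gaussSubst, List.length_append, List.length_append, List.length_replicate,
    List.length_singleton, Nat.sub_add_cancel hc, apply_ite List.length, List.length_singleton,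
    List.length_nil]

lemma gaussSubst_eq_blockWord (a : ℕ → ℕ) : gaussSubst (a 1) = blockWord a 0 := by
  ext1 e
  simp only [gaussSubst, blockWord, sWord]

lemma gaussSubst_flatMap_blockWord (ha : ∀ n, 0 < a n) (n : ℕ) (e : ℝ) :
    (gaussSubst (a (n + 2)) e).flatMap (blockWord a n) = blockWord a (n + 1) e := by
  obtain ⟨b, hb⟩ := Nat.exists_eq_succ_of_ne_zero (ha (n + 2)).ne'
  have hs : sWord a (n + 3) =
      (List.replicate b (sWord a (n + 2))).flatten ++ (sWord a (n + 2) ++ sWord a (n + 1)) := by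
    rw [sWord, hb]
    simp [List.replicate_succ']
  have hzero : blockWord a n 0 = sWord a (n + 2) := by simp [blockWord]
  have hone : blockWord a n 1 = sWord a (n + 2) ++ sWord a (n + 1) := by simp [blockWord]
  rw [gaussSubst, hb, Nat.succ_sub_one, blockWord, hs]
  split_ifs <;> simp [List.flatMap_replicate, hzero, hone]

end StandardWords

section Heights

variable {α : ℝ} {h N : ℤ → ℤ}

/-- The integer sequence `h` follows a line of slope `α` with discrepancy less than one. Exchanging
`i` and `j` shows that the bound is two-sided. -/
def HasSlope (α : ℝ) (h : ℤ → ℤ) : Prop :=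
  ∀ i j : ℤ, (h j : ℝ) - h i < (j - i) * α + 1

lemma hasSlope_floor (α θ : ℝ) : HasSlope α fun n => ⌊n * α + θ⌋ := by
  intro i j
  have := Int.lt_floor_add_one (i * α + θ)
  have := Int.floor_le (j * α + θ)
  linarith

namespace HasSlope

lemma monotone (hs : HasSlope α h) (h0 : 0 ≤ α) : Monotone h := by
  refine monotone_int_of_le_succ fun n => ?_
  have hstep := hs (n + 1) n
  push_cast at hstep
  have : (h n : ℝ) < h (n + 1) + 1 := by linarith
  exact Int.lt_add_one_iff.1 (by exact_mod_cast this)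

lemma apply_succ_le (hs : HasSlope α h) (h1 : α ≤ 1) (n : ℤ) : h (n + 1) ≤ h n + 1 := by
  have hstep := hs n (n + 1)
  push_cast at hstep
  have : (h (n + 1) : ℝ) < h n + 1 + 1 := by linarith
  exact Int.lt_add_one_iff.1 (by exact_mod_cast this)

lemma sub_natCast_mul (hs : HasSlope α h) (c : ℕ) : HasSlope (α - c) fun m => h m - c * m := by
  intro i j
  have := hs i j
  push_cast
  linarith

lemma exists_galoisConnection (hs : HasSlope α h) (h0 : 0 < α) :
    ∃ N : ℤ → ℤ, GaloisConnection N h := by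
  have exists_least (m : ℤ) : ∃ n, m ≤ h n ∧ ∀ z, m ≤ h z → n ≤ z := by
    apply Int.exists_least_of_bdd
    · refine ⟨⌊((m : ℝ) - h 0 - 1) / α⌋, fun z hz => ?_⟩
      have hz' : (m : ℝ) ≤ h z := by exact_mod_cast hz
      have hslope := hs 0 z
      push_cast at hslope
      have : ((m : ℝ) - h 0 - 1) / α < z := by rw [div_lt_iff₀ h0]; linarith
      exact_mod_cast (Int.floor_le _).trans this.le
    · refine ⟨⌈((m : ℝ) - h 0 + 1) / α⌉, ?_⟩
      have hslope := hs ⌈((m : ℝ) - h 0 + 1) / α⌉ 0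
      have hceil := (div_le_iff₀ h0).1 (Int.le_ceil (((m : ℝ) - h 0 + 1) / α))
      push_cast at hslope
      have : (m : ℝ) ≤ h ⌈((m : ℝ) - h 0 + 1) / α⌉ := by linarith
      exact_mod_cast this
  choose N hN hle using exists_least
  exact ⟨N, fun m n => ⟨fun hmn => (hN m).trans (hs.monotone h0.le hmn), hle m n⟩⟩

end HasSlope

lemma apply_lowerAdjoint (gc : GaloisConnection N h) (hstep : ∀ n, h (n + 1) ≤ h n + 1) (m : ℤ) :
    h (N m) = m ∧ h (N m - 1) = m - 1 := by
  have hle : m ≤ h (N m) := gc.le_u_l m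
  have hlt : h (N m - 1) < m := gc.lt_iff_lt.1 (sub_one_lt _)
  have hsucc := hstep (N m - 1)
  rw [sub_add_cancel] at hsucc
  omega

lemma HasSlope.lowerAdjoint (hs : HasSlope α h) (h0 : 0 < α) (h1 : α ≤ 1)
    (gc : GaloisConnection N h) : HasSlope α⁻¹ N := by
  intro i j
  -- The strict bound comes from the last index `N j - 1` at which `h` is still below `j`.
  have hslope := hs (N j - 1) (N i)
  rw [(apply_lowerAdjoint gc (hs.apply_succ_le h1) i).1,
    (apply_lowerAdjoint gc (hs.apply_succ_le h1) j).2] at hslope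
  push_cast at hslope
  have : (N j : ℝ) - N i - 1 < (j - i) * α⁻¹ := by
    rw [← div_eq_mul_inv, lt_div_iff₀ h0]
    linarith
  linarith

/-- The increments of a height sequence, as the letters of a two-sided word over `ℝ`. -/
def increment (h : ℤ → ℤ) (n : ℤ) : ℝ :=
  (h (n + 1) - h n : ℤ)

lemma increment_floor_eq_sturmian (hα : α ∈ Set.Ioo (0 : ℝ) 1) (θ : ℝ) :
    increment (fun n => ⌊n * α + θ⌋) = sturmian α θ := by
  ext n
  have := Int.fract_nonneg (n * α + θ)
  have hlt := Int.fract_lt_one (n * α + θ)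
  have := Int.floor_add_fract (n * α + θ)
  have := hα.1
  have := hα.2
  simp only [increment, sturmian]
  split_ifs with hmem
  · have : ⌊((n + 1 : ℤ) : ℝ) * α + θ⌋ = ⌊n * α + θ⌋ + 1 := by
      rw [Int.floor_eq_iff]
      push_cast
      constructor <;> linarith [hmem.1]
    rw [this]
    simp
  · have hfract : Int.fract (n * α + θ) < 1 - α := not_le.1 fun hle => hmem ⟨hle, hlt⟩
    have : ⌊((n + 1 : ℤ) : ℝ) * α + θ⌋ = ⌊n * α + θ⌋ := by
      rw [Int.floor_eq_iff]
      push_cast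
      constructor <;> linarith
    rw [this]
    simp

lemma increment_lowerAdjoint_sub_one (gc : GaloisConnection N h)
    (hstep : ∀ n, h (n + 1) ≤ h n + 1) (m : ℤ) : increment h (N m - 1) = 1 := by
  obtain ⟨hN, hN'⟩ := apply_lowerAdjoint gc hstep m
  rw [increment, sub_add_cancel, hN, hN']
  simp

lemma increment_eq_zero (gc : GaloisConnection N h) {m n : ℤ} (hl : N m ≤ n)
    (hr : n + 1 < N (m + 1)) : increment h n = 0 := by
  have := gc.le_u hl
  have := gc.le_u (hl.trans (Int.le_add_one le_rfl))
  have := gc.lt_iff_lt.1 hr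
  have := gc.lt_iff_lt.1 ((lt_add_one n).trans hr)
  rw [increment, show h (n + 1) - h n = 0 by omega, Int.cast_zero]

lemma window_increment_eq_replicate_append (gc : GaloisConnection N h)
    (hstep : ∀ n, h (n + 1) ≤ h n + 1) {c : ℕ} (hc : 0 < c) {m : ℤ} (hgap : N m + c ≤ N (m + 1)) :
    window (increment h) (N (m + 1) - c) c = List.replicate (c - 1) 0 ++ [1] := by
  obtain ⟨b, rfl⟩ := Nat.exists_eq_succ_of_ne_zero hc.ne'
  rw [Nat.succ_eq_add_one] at hgap ⊢
  push_cast at hgap ⊢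
  rw [window_add, window_one, window_eq_replicate (b := 0)]
  · rw [show N (m + 1) - (b + 1 : ℤ) + b = N (m + 1) - 1 by ring,
      increment_lowerAdjoint_sub_one gc hstep]
  · exact fun j hl hr => increment_eq_zero gc (m := m) (by omega) (by omega)

lemma isCutting_gaussSubst (gc : GaloisConnection N h) (hstep : ∀ n, h (n + 1) ≤ h n + 1) {c : ℕ}
    (hc : 0 < c) (hgap : ∀ m, N (m + 1) = N m + c ∨ N (m + 1) = N m + c + 1) :
    IsCutting (gaussSubst c) (increment fun m => N m - c * m) (fun m => N m - c) (increment h) := by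
  intro m
  have hbase : window (increment h) (N m - c) c = List.replicate (c - 1) 0 ++ [1] := by
    have hprev := hgap (m - 1)
    have := window_increment_eq_replicate_append gc hstep hc (m := m - 1)
    rw [sub_add_cancel] at hprev this
    exact this (by omega)
  have hinc : increment (fun m => N m - c * m) m = (N (m + 1) - N m - c : ℤ) := by
    rw [increment]
    congr 1
    ring
  rw [hinc, length_gaussSubst hc, gaussSubst]
  rcases hgap m with hm | hm
  · rw [show N (m + 1) - N m - c = 0 by omega]
    simp [hbase, hm]
  · rw [show N (m + 1) - N m - c = 1 by omega]
    have hzero : increment h (N m) = 0 := increment_eq_zero gc le_rfl (by omega)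
    simp only [Int.cast_one, if_true, window_add, window_one, hbase, sub_add_cancel, hzero,
      and_true]
    push_cast
    omega

/-- The factors of the increment sequences of all height sequences of slope `α`. -/
def slopeWords (α : ℝ) : Set (List ℝ) :=
  {w | ∃ h, HasSlope α h ∧ ∃ k n, w = window (increment h) k n}

lemma exists_infix_flatMap_gaussSubst (h0 : 0 < α) (h1 : α ≤ 1) {c : ℕ} (hc : 0 < c)
    (hc0 : 0 ≤ α⁻¹ - c) (hc1 : α⁻¹ - c ≤ 1) {w : List ℝ} (hw : w ∈ slopeWords α) :
    ∃ u ∈ slopeWords (α⁻¹ - c), w <:+: u.flatMap (gaussSubst c) := by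
  obtain ⟨h, hs, k, n, rfl⟩ := hw
  obtain ⟨N, gc⟩ := hs.exists_galoisConnection h0
  have hs' := (hs.lowerAdjoint h0 h1 gc).sub_natCast_mul c
  have hgap (m : ℤ) : N (m + 1) = N m + c ∨ N (m + 1) = N m + c + 1 := by
    have hle := hs'.monotone hc0 (Int.le_add_one (le_refl m))
    have hge := hs'.apply_succ_le hc1 m
    simp only [mul_add, mul_one] at hle hge
    omega
  have hl : N (h k) ≤ k := gc.l_u_le k
  have hr : k + n + c < N (h (k + n + c) + 1) := gc.lt_iff_lt.2 (lt_add_one _)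
  obtain ⟨M, hM⟩ := Int.le.dest (show h k ≤ h (k + n + c) + 1 from
    (hs.monotone h0.le (by omega)).trans (Int.le_add_one le_rfl))
  refine ⟨_, ⟨_, hs', h k, M, rfl⟩,
    (isCutting_gaussSubst gc (hs.apply_succ_le h1) hc hgap).window_infix_flatMap ?_ ?_⟩
  · omega
  · rw [hM]
    omega

end Heights

section ContinuedFraction

variable {α : ℝ}

lemma cfGauss_irrational (hirr : Irrational α) : ∀ n, Irrational (cfGauss α n)
  | 0 => hirr
  | n + 1 => (irrational_inv_iff.2 (cfGauss_irrational hirr n)).sub_intCast _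

lemma cfGauss_mem_Ioo (hirr : Irrational α) (hα : α ∈ Set.Ioo (0 : ℝ) 1) :
    ∀ n, cfGauss α n ∈ Set.Ioo (0 : ℝ) 1
  | 0 => hα
  | n + 1 => ⟨(Int.fract_nonneg _).lt_of_ne' (cfGauss_irrational hirr (n + 1)).ne_zero,
      Int.fract_lt_one _⟩

lemma cfCoeff_pos (hirr : Irrational α) (hα : α ∈ Set.Ioo (0 : ℝ) 1) (n : ℕ) :
    0 < cfCoeff α n := by
  obtain ⟨h0, h1⟩ := cfGauss_mem_Ioo hirr hα (n - 1)
  exact Nat.floor_pos.2 ((one_le_inv₀ h0).2 h1.le)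

lemma cfGauss_succ {n : ℕ} (h0 : 0 ≤ cfGauss α n) :
    cfGauss α (n + 1) = (cfGauss α n)⁻¹ - cfCoeff α (n + 1) := by
  rw [cfGauss, cfCoeff, Int.fract, Nat.add_sub_cancel,
    natCast_floor_eq_intCast_floor (inv_nonneg.2 h0)]

lemma exists_infix_flatMap_blockWord (hirr : Irrational α) (hα : α ∈ Set.Ioo (0 : ℝ) 1)
    {w : List ℝ} (hw : w ∈ slopeWords α) (n : ℕ) :
    ∃ u ∈ slopeWords (cfGauss α (n + 1)), w <:+: u.flatMap (blockWord (cfCoeff α) n) := by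
  have desubstitute (n : ℕ) {w : List ℝ} (hw : w ∈ slopeWords (cfGauss α n)) :
      ∃ u ∈ slopeWords (cfGauss α (n + 1)),
        w <:+: u.flatMap (gaussSubst (cfCoeff α (n + 1))) := by
    obtain ⟨h0, h1⟩ := cfGauss_mem_Ioo hirr hα n
    obtain ⟨h0', h1'⟩ := cfGauss_mem_Ioo hirr hα (n + 1)
    rw [cfGauss_succ h0.le] at h0' h1' ⊢
    exact exists_infix_flatMap_gaussSubst h0 h1.le (cfCoeff_pos hirr hα _) h0'.le h1'.le hw
  induction n with
  | zero => simpa only [zero_add, gaussSubst_eq_blockWord] using desubstitute 0 hw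
  | succ n ih =>
    obtain ⟨u, hu, hwu⟩ := ih
    obtain ⟨u', hu', huu'⟩ := desubstitute (n + 1) hu
    have hflat := huu'.flatMap (blockWord (cfCoeff α) n)
    simp only [List.flatMap_assoc, gaussSubst_flatMap_blockWord (cfCoeff_pos hirr hα)] at hflat
    exact ⟨u', hu', hwu.trans hflat⟩

lemma mem_slopeWords_of_mem_Walpha (hα : α ∈ Set.Ioo (0 : ℝ) 1) {w : List ℝ}
    (hw : w ∈ Walpha α) : w ∈ slopeWords α := by
  obtain ⟨θ, -, -, k, hk⟩ := hw
  refine ⟨_, hasSlope_floor α θ, k, w.length, hk.trans ?_⟩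
  rw [increment_floor_eq_sturmian hα, window]
  simp [← List.map_eq_flatMap]

end ContinuedFraction

end Sturmian

theorem Walpha_decomposition
    (α : ℝ) (hirr : Irrational α) (hα : α ∈ Set.Ioo (0 : ℝ) 1) :
    ∀ w ∈ Walpha α, ∃ t : ℕ, 1 ≤ t ∧ ∃ x y : List ℝ,
      (x <:+ sWord (cfCoeff α) (t + 1) ∨ x <:+ sWord (cfCoeff α) t) ∧
      y <+: sWord (cfCoeff α) (t + 2) ∧ w = x ++ y := by
  intro w hw
  have ha := Sturmian.cfCoeff_pos hirr hα
  have hne : w ≠ [] := let ⟨_, _, hne, _⟩ := hw; hne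
  obtain ⟨u, -, hu⟩ := Sturmian.exists_infix_flatMap_blockWord hirr hα
    (Sturmian.mem_slopeWords_of_mem_Walpha hα hw) (w.length + 1)
  have hlen : w.length ≤ (sWord (cfCoeff α) (w.length + 2)).length :=
    (Nat.le_succ _).trans (Sturmian.le_length_sWord ha _)
  obtain ⟨t, ht⟩ := Sturmian.exists_splitsAt_of_infix_flatMap_blockWord ha hne hlen hu
  exact ⟨t + 1, Nat.le_add_left 1 t, ht.succ ha⟩
end
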